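/- arXiv:1111.7263 — 2 statements merged into one kernel-verified Lean document; each statement's English description precedes it below -/
import Mathlib

section
/- Let k be a field of characteristic 0. Then J_2(5,5) is generated in degrees ≤ 3, and J_3(5,5) is generated in degrees ≤ 3: the ideals of relations among the 2-minors, respectively the 3-minors, of a generic 5×5 matrix are generated by their elements of degree at most 3. -/
open MvPolynomial

/-- The `t`-minor `[I|J]` of the generic `m × n` matrix. -/
noncomputable def genericMinor (k : Type*) [CommRing k] (m n t : ℕ)
    (I : Finset (Fin m)) (J : Finset (Fin n)) (hI : I.card = t) (hJ : J.card = t) :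
    MvPolynomial (Fin m × Fin n) k :=
  Matrix.det (Matrix.of fun a b : Fin t =>
    MvPolynomial.X ((↑(I.orderIsoOfFin hI a) : Fin m), (↑(J.orderIsoOfFin hJ b) : Fin n)))

/-- Index set for the `t`-minors of an `m × n` matrix: pairs `(I, J)` of a `t`-element set
of rows and a `t`-element set of columns. -/
def MinorIndex (t m n : ℕ) : Type :=
  {p : Finset (Fin m) × Finset (Fin n) // p.1.card = t ∧ p.2.card = t}

/-- The presentation map `π : S_t(m,n) → R(m,n)`, sending the indeterminate `y_{I,J}`
to the `t`-minor `[I|J]`. -/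
noncomputable def minorPresentation (k : Type*) [CommRing k] (t m n : ℕ) :
    MvPolynomial (MinorIndex t m n) k →ₐ[k] MvPolynomial (Fin m × Fin n) k :=
  MvPolynomial.aeval fun p => genericMinor k m n t p.1.1 p.1.2 p.2.1 p.2.2

/-- `J_t(m,n)`: the ideal of relations of the `t`-minors of the generic `m × n` matrix. -/
noncomputable def minorRelations (k : Type*) [CommRing k] (t m n : ℕ) :
    Ideal (MvPolynomial (MinorIndex t m n) k) :=
  RingHom.ker (minorPresentation k t m n).toRingHom

/-- An ideal of a polynomial ring is generated in degrees `≤ D` if it is generated by its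
elements of total degree at most `D`. -/
def GeneratedInDegreesLE {k σ : Type*} [CommRing k]
    (I : Ideal (MvPolynomial σ k)) (D : ℕ) : Prop :=
  I = Ideal.span {x | x ∈ I ∧ x.totalDegree ≤ D}

/-!
A homogeneous relation of degree `d` among the `t`-minors is a combination of words, a word being a
pair of fillings, by row and by column indices, of `d` blocks of `t` boxes; each block is one minor.
Permutations `w`, `w'` of the boxes act on the two fillings, and modulo the relations of degree at
most 3 this yields, up to signs, a bilinear form `β` on the group algebra of the permutations,
invariant under the Young subgroup `Y` of permutations preserving the blocks. Let `e` be the sum of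
the elements of `Y`.

If `w` moves points out of at most three blocks, then `e w` can be transferred from the first
argument of `β` to `e w⁻¹` in the second: the difference is a relation of degree at most 3 times a
product of minors. The elements that can be transferred form a subspace `N` with `N e N ⊆ N`, and
`N` is the whole group algebra, by induction on the number of blocks involved and of points moved to
another block. A permutation which is not a cycle through pairwise different blocks splits into
smaller ones. A longer such cycle is `v u` with `u = (p₁ p₂ p₃)` and `v` not involving the block of
`p₂`. Let `f` be the symmetrizer of the block structure obtained by moving `p₁` to the block of
`p₃`. Since the standard inner product is positive definite and the blocks have equal size,
`f e y = f` for some `y` in the algebra generated by `e` and `f`; thus `v f u = (v f) e (y u)` lies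
in `N`, and every term of `v f u` either lies in the double coset `Y v u Y` or moves fewer points to
another block.

A relation satisfies `∑ w, β w (e w g) = 0` for all permutations `g`. Transferring everything to the
first argument gives `β (z r) 1 = 0` for `z = ∑ w, w e w⁻¹` and all central `r`. Again by
positivity, some such `r` satisfies `z r e = e`, whence `β 1 1 = 0`, so that the relation is
generated in degrees at most 3.
-/

/-! ### Symmetrizers in group algebras -/

section GroupAlgebra

open MonoidAlgebra (of of_apply)
open HopfAlgebra (antipode antipode_mul_antidistrib)
open scoped MonoidAlgebra

theorem exists_mem_adjoin_singleton_mul_mul_eq {K A : Type*} [Field K] [Ring A] [Algebra K A]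
    [Module.Finite K A] {s f : A}
    (h : ∀ r ∈ Algebra.adjoin K {s}, s * (r * f) = 0 → r * f = 0) :
    ∃ r ∈ Algebra.adjoin K {s}, s * (r * f) = f := by
  let W := (Subalgebra.toSubmodule (Algebra.adjoin K {s})).map (LinearMap.mulRight K f)
  have hW : ∀ x ∈ W, LinearMap.mulLeft K s x ∈ W := by
    rintro _ ⟨r, hr, rfl⟩
    exact ⟨s * r, Subalgebra.mul_mem _ (Algebra.self_mem_adjoin_singleton K s) hr, mul_assoc s r f⟩
  have hinj : Function.Injective ((LinearMap.mulLeft K s).restrict hW) := by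
    rw [injective_iff_map_eq_zero]
    rintro ⟨_, r, hr, rfl⟩ hx
    exact Subtype.ext (h r hr (congrArg Subtype.val hx))
  obtain ⟨⟨_, r, hr, rfl⟩, hx⟩ :=
    LinearMap.surjective_of_injective hinj ⟨f, 1, Subalgebra.one_mem _, one_mul f⟩
  exact ⟨r, hr, congrArg Subtype.val hx⟩

section Antipode

variable {K G : Type*} [CommSemiring K] [Group G]

theorem antipode_of (g : G) : antipode K (of K G g) = of K G g⁻¹ := by
  simp [MonoidAlgebra.antipode_single]

end Antipode

section CoeffForm

variable {K G : Type*} [Fintype G]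

/-- The standard bilinear form on a finite group algebra, for which the group elements form an
orthonormal basis. -/
noncomputable def coeffForm (K G : Type*) [Fintype G] [CommRing K] : LinearMap.BilinForm K K[G] :=
  LinearMap.mk₂ K (fun a b => ∑ g, a.coeff g * b.coeff g)
    (fun a b c => by simp [add_mul, Finset.sum_add_distrib])
    (fun r a b => by simp [mul_assoc, Finset.mul_sum])
    (fun a b c => by simp [mul_add, Finset.sum_add_distrib])
    (fun r a b => by simp [mul_left_comm, Finset.mul_sum])

theorem coeffForm_apply [CommRing K] (a b : K[G]) :
    coeffForm K G a b = ∑ g, a.coeff g * b.coeff g := rfl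

theorem coeffForm_mul_left [Group G] [CommRing K] (x a b : K[G]) :
    coeffForm K G (x * a) b = coeffForm K G a (antipode K x * b) := by
  induction x using MonoidAlgebra.induction_on with
  | of g =>
    rw [antipode_of]
    simp only [coeffForm_apply, of_apply, MonoidAlgebra.coeff_single_mul_apply, one_mul, inv_inv]
    exact Fintype.sum_equiv (Equiv.mulLeft g⁻¹) _ _ fun h => by simp
  | add x y hx hy => simp [add_mul, hx, hy]
  | smul r x hx => simp [hx]

variable [Field K] [LinearOrder K] [IsStrictOrderedRing K]

theorem coeffForm_self_nonneg (a : K[G]) : 0 ≤ coeffForm K G a a :=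
  Finset.sum_nonneg fun _ _ => mul_self_nonneg _

theorem coeffForm_self_eq_zero {a : K[G]} : coeffForm K G a a = 0 ↔ a = 0 := by
  refine ⟨fun h => ?_, fun h => by simp [h]⟩
  have h' := (Finset.sum_eq_zero_iff_of_nonneg fun g _ => mul_self_nonneg (a.coeff g)).1 h
  ext g
  simpa using h' g (Finset.mem_univ g)

end CoeffForm

section SubgroupSum

variable {K G : Type*} [Group G]

/-- The sum of the elements of a finite subgroup `H`, in the group algebra. It is `|H|` times the
idempotent projecting onto the `H`-invariants. -/
noncomputable def subgroupSum (K : Type*) {G : Type*} [Group G] [Semiring K] (H : Subgroup G)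
    [Fintype H] : K[G] :=
  ∑ σ : H, of K G σ

section Semiring

variable [CommSemiring K] {H : Subgroup G} [Fintype H]

theorem of_mul_subgroupSum {σ : G} (hσ : σ ∈ H) :
    of K G σ * subgroupSum K H = subgroupSum K H := by
  rw [subgroupSum, Finset.mul_sum]
  exact Fintype.sum_equiv (Equiv.mulLeft ⟨σ, hσ⟩) _ _ fun τ => by simp [of, map_mul]

theorem subgroupSum_mul_of {σ : G} (hσ : σ ∈ H) :
    subgroupSum K H * of K G σ = subgroupSum K H := by
  rw [subgroupSum, Finset.sum_mul]
  exact Fintype.sum_equiv (Equiv.mulRight ⟨σ, hσ⟩) _ _ fun τ => by simp [of]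

theorem subgroupSum_mul_of_mul {σ : G} (hσ : σ ∈ H) (g : G) :
    subgroupSum K H * of K G (σ * g) = subgroupSum K H * of K G g := by
  rw [map_mul, ← mul_assoc, subgroupSum_mul_of hσ]

theorem antipode_subgroupSum : antipode K (subgroupSum K H) = subgroupSum K H := by
  rw [subgroupSum, map_sum]
  exact Fintype.sum_equiv (Equiv.inv H) _ _ fun τ => by rw [antipode_of]; rfl

theorem subgroupSum_mul_of_forall {v : K[G]} (hv : ∀ σ ∈ H, of K G σ * v = v) :
    subgroupSum K H * v = (Fintype.card H : K) • v := by
  rw [subgroupSum, Finset.sum_mul, Finset.sum_congr rfl fun (σ : H) _ => hv σ σ.2, Finset.sum_const,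
    Finset.card_univ, Nat.cast_smul_eq_nsmul]

theorem subgroupSum_mul_self :
    subgroupSum K H * subgroupSum K H = (Fintype.card H : K) • subgroupSum K H :=
  subgroupSum_mul_of_forall fun _ => of_mul_subgroupSum

end Semiring

section CommRing

variable [CommRing K] [Fintype G] {H : Subgroup G} [Fintype H]

theorem card_mul_coeffForm_subgroupSum_mul (v : K[G]) :
    Fintype.card H * coeffForm K G v (subgroupSum K H * v) =
      coeffForm K G (subgroupSum K H * v) (subgroupSum K H * v) := by
  rw [coeffForm_mul_left, antipode_subgroupSum, ← mul_assoc, subgroupSum_mul_self, smul_mul_assoc,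
    map_smul, smul_eq_mul]

/-- The sum of the conjugates of `subgroupSum K H`, a central element of the group algebra. -/
noncomputable def conjSum (K : Type*) {G : Type*} [Group G] [Fintype G] [CommRing K]
    (H : Subgroup G) [Fintype H] : K[G] :=
  ∑ w : G, of K G w * subgroupSum K H * of K G w⁻¹

theorem conjSum_mem_center : conjSum K H ∈ Subalgebra.center K K[G] := by
  rw [Subalgebra.mem_center_iff]
  intro x
  induction x using MonoidAlgebra.induction_on with
  | of u =>
    rw [conjSum, Finset.mul_sum, Finset.sum_mul]
    refine Fintype.sum_equiv (Equiv.mulLeft u) _ _ fun w => ?_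
    simp only [Equiv.coe_mulLeft, mul_inv_rev, map_mul, mul_assoc]
    rw [← map_mul _ u⁻¹ u, inv_mul_cancel, map_one, mul_one]
  | add x y hx hy => rw [add_mul, mul_add, hx, hy]
  | smul r x hx => rw [smul_mul_assoc, mul_smul_comm, hx]

end CommRing

variable [Field K] [LinearOrder K] [IsStrictOrderedRing K] [Fintype G] {H : Subgroup G} [Fintype H]

theorem coeffForm_subgroupSum_mul_nonneg (v : K[G]) :
    0 ≤ coeffForm K G v (subgroupSum K H * v) := by
  refine nonneg_of_mul_nonneg_right ?_ (Nat.cast_pos.2 (Fintype.card_pos (α := H)))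
  rw [card_mul_coeffForm_subgroupSum_mul]
  exact coeffForm_self_nonneg _

theorem subgroupSum_mul_eq_zero {v : K[G]} (h : coeffForm K G v (subgroupSum K H * v) = 0) :
    subgroupSum K H * v = 0 := by
  rw [← coeffForm_self_eq_zero, ← card_mul_coeffForm_subgroupSum_mul, h, mul_zero]

theorem subgroupSum_mul_eq_zero_of_conjSum_mul_eq_zero {v : K[G]} (h : conjSum K H * v = 0) :
    subgroupSum K H * v = 0 := by
  have hsum : ∑ w : G, coeffForm K G (of K G w⁻¹ * v) (subgroupSum K H * (of K G w⁻¹ * v)) = 0 := by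
    calc _ = coeffForm K G v (conjSum K H * v) := by
          rw [conjSum, Finset.sum_mul, map_sum]
          refine Finset.sum_congr rfl fun w _ => ?_
          rw [coeffForm_mul_left, antipode_of, inv_inv]
          simp only [mul_assoc]
      _ = 0 := by rw [h, map_zero]
  rw [Finset.sum_eq_zero_iff_of_nonneg fun w _ => coeffForm_subgroupSum_mul_nonneg _] at hsum
  have h1 := subgroupSum_mul_eq_zero (hsum 1 (Finset.mem_univ _))
  rwa [inv_one, map_one, one_mul] at h1

theorem exists_mem_center_conjSum_mul_mul (K : Type*) [Field K] [LinearOrder K]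
    [IsStrictOrderedRing K] (H : Subgroup G) [Fintype H] :
    ∃ r ∈ Subalgebra.center K K[G], conjSum K H * (r * subgroupSum K H) = subgroupSum K H := by
  have hle : Algebra.adjoin K {conjSum K H} ≤ Subalgebra.center K K[G] :=
    Algebra.adjoin_le (Set.singleton_subset_iff.2 conjSum_mem_center)
  obtain ⟨r, hr, h⟩ := exists_mem_adjoin_singleton_mul_mul_eq (K := K) (s := conjSum K H)
    (f := subgroupSum K H) fun r hr h => by
      have h' := subgroupSum_mul_eq_zero_of_conjSum_mul_eq_zero h
      rw [subgroupSum_mul_of_forall fun σ hσ => by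
        rw [← mul_assoc, Subalgebra.mem_center_iff.1 (hle hr), mul_assoc, of_mul_subgroupSum hσ]]
        at h'
      exact (smul_eq_zero.1 h').resolve_left (Nat.cast_ne_zero.2 Fintype.card_ne_zero)
  exact ⟨r, hle hr, h⟩

end SubgroupSum
end GroupAlgebra

/-! ### Hecke closed subspaces and transfer -/

section Hecke

open MonoidAlgebra (of)
open HopfAlgebra (antipode antipode_mul_antidistrib)
open scoped MonoidAlgebra

theorem mem_submodule_of_sum_mem {ι K M : Type*} [DivisionRing K] [CharZero K] [AddCommGroup M]
    [Module K M] {N : Submodule K M} {s : Finset ι} {x : ι → M} {y : M}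
    (hsum : ∑ i ∈ s, x i ∈ N) (h : ∀ i ∈ s, x i ∈ N ∨ x i - y ∈ N) (hy : ∃ i ∈ s, x i = y) :
    y ∈ N := by
  classical
  by_contra hyN
  obtain ⟨i, hi, rfl⟩ := hy
  have hcard : (s.filter (x · ∉ N)).card ≠ 0 := Finset.card_ne_zero.2 ⟨i, by simp [hi, hyN]⟩
  have hsum' : ∑ j ∈ s with x j ∉ N, x j ∈ N := by
    rw [← Finset.sum_filter_not_add_sum_filter s (x · ∉ N)] at hsum
    exact (N.add_mem_iff_right <| sum_mem fun j hj => not_not.1 (Finset.mem_filter.1 hj).2).1 hsum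
  have hdiff : ∑ j ∈ s with x j ∉ N, (x j - x i) ∈ N := sum_mem fun j hj =>
    (h j (Finset.mem_filter.1 hj).1).resolve_left (Finset.mem_filter.1 hj).2
  rw [Finset.sum_sub_distrib, N.sub_mem_iff_right hsum', Finset.sum_const,
    ← Nat.cast_smul_eq_nsmul K, N.smul_mem_iff (Nat.cast_ne_zero.2 hcard)] at hdiff
  exact hyN hdiff

theorem toSubmodule_adjoin_image_of {K G : Type*} [CommSemiring K] [Monoid G] (M : Submonoid G) :
    (Algebra.adjoin K (of K G '' M)).toSubmodule = Submodule.span K (of K G '' M) := by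
  rw [← Submonoid.coe_map, Algebra.adjoin_eq_span, Submonoid.closure_eq]

theorem adjoin_subgroupSum_le_of_le {K G : Type*} [CommSemiring K] [Group G]
    (M : Submonoid G) {H H' : Subgroup G}
    [Fintype H] [Fintype H'] (hH : H.toSubmonoid ≤ M) (hH' : H'.toSubmonoid ≤ M) :
    Algebra.adjoin K {subgroupSum K H, subgroupSum K H'} ≤ Algebra.adjoin K (of K G '' M) :=
  Algebra.adjoin_le <| by
    rintro _ (rfl | rfl)
    · exact sum_mem fun σ _ => Algebra.subset_adjoin ⟨σ, hH σ.2, rfl⟩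
    · exact sum_mem fun σ _ => Algebra.subset_adjoin ⟨σ, hH' σ.2, rfl⟩

theorem mul_of_mem_of_mem_adjoin {K G : Type*} [CommSemiring K] [Monoid G]
    {N : Submodule K K[G]} {M : Submonoid G}
    (hM : ∀ x ∈ M, of K G x ∈ N) {u : G} (hu : u ∈ M) {y : K[G]}
    (hy : y ∈ Algebra.adjoin K (of K G '' M)) : y * of K G u ∈ N := by
  rw [← Subalgebra.mem_toSubmodule, toSubmodule_adjoin_image_of] at hy
  induction hy using Submodule.span_induction with
  | mem _ h =>
    obtain ⟨x, hx, rfl⟩ := h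
    rw [← map_mul]
    exact hM _ (mul_mem hx hu)
  | zero => rw [zero_mul]; exact zero_mem N
  | add _ _ _ _ hx hy => rw [add_mul]; exact add_mem hx hy
  | smul c _ _ hx => rw [smul_mul_assoc]; exact N.smul_mem c hx

section RightInvariant

variable {K G V : Type*} [Group G] {H : Subgroup G} [CommRing K] [AddCommGroup V] [Module K V]
  {β γ : K[G] →ₗ[K] K[G] →ₗ[K] V}

theorem bilinearMap_ext_of
    (h : ∀ g g' : G, β (of K G g) (of K G g') = γ (of K G g) (of K G g')) : β = γ :=
  LinearMap.ext_basis (MonoidAlgebra.basis G K) (MonoidAlgebra.basis G K) fun g g' => by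
    simpa only [MonoidAlgebra.basis_apply, MonoidAlgebra.of_apply] using h g g'

/-- A bilinear map on the group algebra is right `H`-invariant if right multiplication of either
argument by an element of `H` does not change its value. -/
structure IsRightInvariant (H : Subgroup G) (β : K[G] →ₗ[K] K[G] →ₗ[K] V) : Prop where
  mul_of_left {σ : G} : σ ∈ H → ∀ x y, β (x * of K G σ) y = β x y
  mul_of_right {σ : G} : σ ∈ H → ∀ x y, β x (y * of K G σ) = β x y

theorem IsRightInvariant.of_forall
    (hl : ∀ σ ∈ H, ∀ g g' : G, β (of K G (g * σ)) (of K G g') = β (of K G g) (of K G g'))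
    (hr : ∀ σ ∈ H, ∀ g g' : G, β (of K G g) (of K G (g' * σ)) = β (of K G g) (of K G g')) :
    IsRightInvariant H β where
  mul_of_left {σ} hσ x y := by
    have hext : β.compl₁₂ (.mulRight K (of K G σ)) .id = β :=
      bilinearMap_ext_of fun g g' => by simpa using hl σ hσ g g'
    exact LinearMap.congr_fun₂ hext x y
  mul_of_right {σ} hσ x y := by
    have hext : β.compl₁₂ .id (.mulRight K (of K G σ)) = β :=
      bilinearMap_ext_of fun g g' => by simpa using hr σ hσ g g'
    exact LinearMap.congr_fun₂ hext x y

end RightInvariant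

variable {K G V : Type*} [Group G] {H : Subgroup G} [Fintype H]

/-- A subspace `N` of the group algebra is Hecke closed for `H` if, with `e = subgroupSum K H`, the
subspace `e N e` of the Hecke algebra `e K[G] e` is closed under multiplication, and `N` contains
the difference of any two group elements from the same `H`-double coset. -/
structure IsHeckeClosed [CommRing K] (H : Subgroup G) [Fintype H] (N : Submodule K K[G]) :
    Prop where
  mul_subgroupSum_mul_mem {a c : K[G]} : a ∈ N → c ∈ N → a * subgroupSum K H * c ∈ N
  of_sub_of_mem {w w' : G} : w' ∈ DoubleCoset.doubleCoset w H H → of K G w' - of K G w ∈ N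

theorem IsHeckeClosed.of_mem_iff [CommRing K] {N : Submodule K K[G]} (hN : IsHeckeClosed H N)
    {w w' : G} (h : w' ∈ DoubleCoset.doubleCoset w H H) : of K G w' ∈ N ↔ of K G w ∈ N := by
  rw [← sub_add_cancel (of K G w') (of K G w), N.add_mem_iff_right (hN.of_sub_of_mem h)]

theorem of_mul_subgroupSum_mul_of [CommRing K] (w₁ w₂ : G) :
    of K G w₁ * subgroupSum K H * of K G w₂ = ∑ σ : H, of K G (w₁ * σ * w₂) := by
  simp only [subgroupSum, Finset.mul_sum, Finset.sum_mul, map_mul]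

theorem IsHeckeClosed.of_mem_of_sum_mem [Field K] [CharZero K] {N : Submodule K K[G]}
    (hN : IsHeckeClosed H N) {α : Type*} [Fintype α] {F : α → G} {w : G}
    (hsum : ∑ s, of K G (F s) ∈ N)
    (h : ∀ s, of K G (F s) ∈ N ∨ F s ∈ DoubleCoset.doubleCoset w H H) (hw : ∃ s, F s = w) :
    of K G w ∈ N :=
  mem_submodule_of_sum_mem hsum (fun s _ => (h s).imp_right hN.of_sub_of_mem)
    (hw.imp fun s hs => ⟨Finset.mem_univ s, by rw [hs]⟩)

section Transfer

variable [CommRing K] [AddCommGroup V] [Module K V] {β : K[G] →ₗ[K] K[G] →ₗ[K] V}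

/-- The elements `a` of the group algebra such that, with `e = subgroupSum K H`, right
multiplication by `e a` in the first argument of `β` can be transferred to right multiplication by
`e a*` in the second one, where `a*` is the antipode of `a`. -/
noncomputable def transferSubmodule (H : Subgroup G) [Fintype H]
    (β : K[G] →ₗ[K] K[G] →ₗ[K] V) : Submodule K K[G] where
  carrier := {a | ∀ x y, β (x * subgroupSum K H * a) y = β x (y * subgroupSum K H * antipode K a)}
  zero_mem' x y := by simp
  add_mem' ha hc x y := by simp only [mul_add, map_add, LinearMap.add_apply, ha x y, hc x y]
  smul_mem' r a ha x y := by simp only [mul_smul_comm, map_smul, LinearMap.smul_apply, ha x y]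

theorem of_mem_transferSubmodule {w : G} (h : ∀ g g' : G,
      β (of K G g * subgroupSum K H * of K G w) (of K G g') =
        β (of K G g) (of K G g' * subgroupSum K H * of K G w⁻¹)) :
    of K G w ∈ transferSubmodule H β := by
  have hext : β.compl₁₂ (.mulRight K (subgroupSum K H * of K G w)) .id =
      β.compl₁₂ .id (.mulRight K (subgroupSum K H * of K G w⁻¹)) :=
    bilinearMap_ext_of fun g g' => by simpa [mul_assoc] using h g g'
  intro x y
  rw [antipode_of, mul_assoc, mul_assoc]
  exact LinearMap.congr_fun₂ hext x y

theorem IsRightInvariant.isHeckeClosed_transferSubmodule (hβ : IsRightInvariant H β) :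
    IsHeckeClosed H (transferSubmodule H β) where
  mul_subgroupSum_mul_mem {a c} ha hc x y := by
    calc β (x * subgroupSum K H * (a * subgroupSum K H * c)) y
        = β (x * subgroupSum K H * a * subgroupSum K H * c) y := by simp only [mul_assoc]
      _ = β x (y * subgroupSum K H * antipode K c * subgroupSum K H * antipode K a) := by
        rw [hc, ha]
      _ = _ := by
        simp only [antipode_mul_antidistrib, antipode_subgroupSum, mul_assoc]
  of_sub_of_mem {w w'} h x y := by
    obtain ⟨σ, hσ, τ, hτ, rfl⟩ := DoubleCoset.mem_doubleCoset.1 h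
    have hleft : β (x * subgroupSum K H * of K G (σ * w * τ)) y =
        β (x * subgroupSum K H * of K G w) y := by
      rw [mul_assoc x, mul_assoc σ, subgroupSum_mul_of_mul hσ, map_mul (of K G), ← mul_assoc,
        ← mul_assoc, hβ.mul_of_left hτ]
    have hright : β x (y * subgroupSum K H * of K G (σ * w * τ)⁻¹) =
        β x (y * subgroupSum K H * of K G w⁻¹) := by
      rw [mul_inv_rev, mul_inv_rev, mul_assoc y, subgroupSum_mul_of_mul (H.inv_mem hτ),
        map_mul (of K G), ← mul_assoc, ← mul_assoc, hβ.mul_of_right (H.inv_mem hσ)]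
    simp only [mul_sub, map_sub, LinearMap.sub_apply, antipode_of, hleft, hright, sub_self]

theorem IsRightInvariant.apply_mul_subgroupSum (hβ : IsRightInvariant H β) (x y : K[G]) :
    β (x * subgroupSum K H) y = (Fintype.card H : K) • β x y := by
  rw [subgroupSum, Finset.mul_sum, map_sum, LinearMap.sum_apply,
    Finset.sum_congr rfl fun (σ : H) _ => hβ.mul_of_left σ.2 x y, Finset.sum_const,
    Finset.card_univ, Nat.cast_smul_eq_nsmul]

end Transfer

variable [Field K] [LinearOrder K] [IsStrictOrderedRing K] [Fintype G] [AddCommGroup V] [Module K V]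
  {β : K[G] →ₗ[K] K[G] →ₗ[K] V}

theorem IsRightInvariant.apply_one_one_eq_zero (hβ : IsRightInvariant H β)
    (htop : transferSubmodule H β = ⊤)
    (h : ∀ g : G, ∑ w : G, β (of K G w) (subgroupSum K H * of K G w * of K G g) = 0) :
    β 1 1 = 0 := by
  obtain ⟨r, hr, hre⟩ := exists_mem_center_conjSum_mul_mul K H
  rw [Subalgebra.mem_center_iff] at hr
  have h' (a : K[G]) : ∑ w : G, β (of K G w) (subgroupSum K H * of K G w * a) = 0 := by
    induction a using MonoidAlgebra.induction_on with
    | of g => exact h g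
    | add x y hx hy => simp only [mul_add, map_add, Finset.sum_add_distrib, hx, hy, add_zero]
    | smul r x hx => simp only [mul_smul_comm, map_smul, ← Finset.smul_sum, hx, smul_zero]
  have hzr : β (conjSum K H * r) 1 = 0 := by
    rw [← h' (antipode K r), conjSum, Finset.sum_mul, map_sum, LinearMap.sum_apply]
    refine Finset.sum_congr rfl fun w _ => ?_
    have hmem : of K G w⁻¹ * r ∈ transferSubmodule H β := htop ▸ Submodule.mem_top
    rw [mul_assoc _ (of K G w⁻¹) r, hmem, hr, antipode_mul_antidistrib, antipode_of, inv_inv,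
      one_mul, mul_assoc]
  have he := hβ.apply_mul_subgroupSum 1 1
  rw [one_mul, ← hre, ← mul_assoc, hβ.apply_mul_subgroupSum, hzr, smul_zero] at he
  exact (smul_eq_zero.1 he.symm).resolve_left (Nat.cast_ne_zero.2 Fintype.card_ne_zero)

end Hecke

/-! ### Young subgroups -/

section YoungSubgroup

open Equiv Equiv.Perm

variable {P ι : Type*} {b : P → ι}

/-- The Young subgroup of a labelling `b` of `P` by blocks: the permutations preserving every block.
-/
def youngSubgroup (b : P → ι) : Subgroup (Perm P) where
  carrier := {σ | ∀ p, b (σ p) = b p}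
  mul_mem' {x y} hx hy p := (hx (y p)).trans (hy p)
  one_mem' _ := rfl
  inv_mem' {x} hx p := by simpa using (hx (x⁻¹ p)).symm

theorem mem_youngSubgroup {σ : Perm P} : σ ∈ youngSubgroup b ↔ ∀ p, b (σ p) = b p := Iff.rfl

instance [Fintype P] [DecidableEq ι] (b : P → ι) : DecidablePred (· ∈ youngSubgroup b) :=
  fun _ => decidable_of_iff _ mem_youngSubgroup.symm

theorem swap_mem_youngSubgroup [DecidableEq P] {x y : P} (h : b x = b y) :
    swap x y ∈ youngSubgroup b := by
  intro p
  rcases eq_or_ne p x with rfl | hx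
  · rw [swap_apply_left, h]
  rcases eq_or_ne p y with rfl | hy
  · rw [swap_apply_right, h]
  rw [swap_apply_of_ne_of_ne hx hy]

theorem mem_youngSubgroup_update [DecidableEq P] {σ : Perm P} {p : P} (hσ : σ ∈ youngSubgroup b)
    (hp : σ p = p) (i : ι) : σ ∈ youngSubgroup (Function.update b p i) := by
  intro q
  rcases eq_or_ne q p with rfl | hq
  · rw [hp]
  · have hσq : σ q ≠ p := hp ▸ σ.injective.ne hq
    rw [Function.update_of_ne hq, Function.update_of_ne hσq, hσ]

theorem exists_mem_youngSubgroup_eqOn {S : Set P} (hS : S.Finite) {φ : P → P}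
    (hinj : Set.InjOn φ S) (hφ : ∀ p ∈ S, b (φ p) = b p) :
    ∃ τ ∈ youngSubgroup b, ∀ p ∈ S, τ p = φ p := by
  classical
  induction S, hS using Set.Finite.induction_on with
  | empty => exact ⟨1, one_mem _, by simp⟩
  | @insert p S hp _ ih =>
    obtain ⟨τ, hτ, h⟩ := ih (hinj.mono (Set.subset_insert p S)) fun q hq => hφ q (Or.inr hq)
    have hb : b (τ p) = b (φ p) := by rw [hτ, hφ p (Or.inl rfl)]
    refine ⟨swap (τ p) (φ p) * τ, mul_mem (swap_mem_youngSubgroup hb) hτ, fun q hq => ?_⟩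
    rcases hq with rfl | hqS
    · rw [Perm.mul_apply, swap_apply_left]
    have hqp : q ≠ p := ne_of_mem_of_not_mem hqS hp
    have hne : φ q ≠ φ p := fun h' => hqp (hinj (Or.inr hqS) (Or.inl rfl) h')
    rw [Perm.mul_apply, swap_apply_of_ne_of_ne (τ.injective.ne hqp) (h q hqS ▸ hne), h q hqS]

/-- The permutations that only move points out of blocks belonging to `B`. -/
def movingBlocks (b : P → ι) (B : Finset ι) : Submonoid (Perm P) where
  carrier := {w | ∀ p, b p ∉ B → b (w p) = b p}
  mul_mem' {x y} hx hy p hp := by rw [Perm.mul_apply, hx _ (by rwa [hy p hp]), hy p hp]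
  one_mem' _ _ := rfl

theorem movingBlocks_mono {B C : Finset ι} (h : B ⊆ C) : movingBlocks b B ≤ movingBlocks b C :=
  fun _ hw p hp => hw p fun h' => hp (h h')

theorem mem_movingBlocks_of_mem_youngSubgroup {σ : Perm P} (h : σ ∈ youngSubgroup b)
    (B : Finset ι) : σ ∈ movingBlocks b B :=
  fun p _ => h p

theorem mem_movingBlocks_update [DecidableEq P] {p : P} {i : ι} {σ : Perm P}
    {B : Finset ι} (hp : b p ∈ B) (hi : i ∈ B) (hσ : σ ∈ youngSubgroup (Function.update b p i)) :
    σ ∈ movingBlocks b B := by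
  intro q hq
  have hqp : q ≠ p := by rintro rfl; exact hq hp
  have h := hσ q
  rw [Function.update_of_ne hqp] at h
  have hσq : σ q ≠ p := fun h' => hq (by rwa [← h, h', Function.update_self])
  rwa [Function.update_of_ne hσq] at h

theorem mem_movingBlocks_of_forall {B : Finset ι} {v w : Perm P} (hw : w ∈ movingBlocks b B)
    (h : ∀ q, v q ≠ q → v q = w q) : v ∈ movingBlocks b B := by
  intro q hq
  by_cases hvq : v q = q
  · rw [hvq]
  · rw [h q hvq, hw q hq]

/-- A permutation is block reduced if every point that it moves is moved to another block. -/
def IsBlockReduced (b : P → ι) (w : Perm P) : Prop := ∀ p, w p ≠ p → b (w p) ≠ b p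

theorem IsBlockReduced.of_forall {v w : Perm P} (hw : IsBlockReduced b w)
    (h : ∀ q, v q ≠ q → v q = w q) : IsBlockReduced b v := fun q hq => by
  have hvw := h q hq
  rw [hvw]
  exact hw q (hvw ▸ hq)

theorem IsBlockReduced.mem_of_mem_movingBlocks {B : Finset ι} {w : Perm P}
    (hw : IsBlockReduced b w) (hB : w ∈ movingBlocks b B) {q : P} (hq : w q ≠ q) : b q ∈ B :=
  not_not.1 fun h => hw q hq (hB q h)

theorem IsBlockReduced.mul_swap [DecidableEq P] {w : Perm P} (hw : IsBlockReduced b w) {x y : P}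
    (hx : w x ≠ x) (hy : w y ≠ y) (hb : b x = b y) : IsBlockReduced b (w * swap x y) := by
  intro p hp
  rw [Perm.mul_apply] at hp ⊢
  rcases eq_or_ne p x with rfl | hpx
  · rw [swap_apply_left, hb]
    exact hw y hy
  rcases eq_or_ne p y with rfl | hpy
  · rw [swap_apply_right, ← hb]
    exact hw x hx
  rw [swap_apply_of_ne_of_ne hpx hpy] at hp ⊢
  exact hw p hp

theorem exists_isBlockReduced_mul [Finite P] (b : P → ι) (w : Perm P) :
    ∃ σ ∈ youngSubgroup b, IsBlockReduced b (σ * w) := by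
  classical
  have := Fintype.ofFinite P
  obtain ⟨σ, hσ⟩ := Finite.exists_min fun σ : youngSubgroup b => ((σ : Perm P) * w).support.card
  refine ⟨σ, σ.2, fun p hp hb => ?_⟩
  have hswap : swap p ((σ * w : Perm P) p) ∈ youngSubgroup b := swap_mem_youngSubgroup hb.symm
  refine (hσ (⟨_, hswap⟩ * σ)).not_gt ?_
  simpa only [Subgroup.coe_mul, mul_assoc] using card_support_swap_mul hp

variable [Fintype P] [DecidableEq ι]

/-- The points that a permutation moves to another block. -/
def displaced (b : P → ι) (w : Perm P) : Finset P := {p | b (w p) ≠ b p}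

theorem mem_displaced {w : Perm P} {p : P} : p ∈ displaced b w ↔ b (w p) ≠ b p := by
  simp [displaced]

theorem displaced_mul_left {w σ : Perm P} (h : σ ∈ youngSubgroup b) :
    displaced b (σ * w) = displaced b w := by
  ext p
  rw [mem_displaced, mem_displaced, Perm.mul_apply, h]

theorem card_displaced_mul_right {w σ : Perm P} (h : σ ∈ youngSubgroup b) :
    (displaced b (w * σ)).card = (displaced b w).card :=
  Finset.card_equiv σ fun p => by rw [mem_displaced, mem_displaced, Perm.mul_apply, h p]

theorem IsBlockReduced.displaced_eq_support [DecidableEq P] {w : Perm P} (hw : IsBlockReduced b w) :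
    displaced b w = w.support := by
  ext p
  rw [mem_displaced, mem_support]
  exact ⟨fun h h' => h (by rw [h']), hw p⟩

end YoungSubgroup

section Positivity

open Equiv Equiv.Perm
open MonoidAlgebra (of)
open scoped MonoidAlgebra

variable {K P ι : Type*} [Field K] [LinearOrder K] [IsStrictOrderedRing K]
  [Fintype P] [DecidableEq P] [DecidableEq ι]

theorem exists_subgroupSum_youngSubgroup_mul_eq (K : Type*) [Field K] [LinearOrder K]
    [IsStrictOrderedRing K] (b : P → ι) (p : P) :
    ∃ r : K, 0 < r ∧ ∀ v : K[Perm P], (∀ σ ∈ youngSubgroup b, σ p = p → of K _ σ * v = v) →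
      subgroupSum K (youngSubgroup b) * v = r • ∑ a with b a = b p, of K _ (swap a p) * v := by
  refine ⟨(Finset.univ.filter fun σ : youngSubgroup b => (σ : Perm P) p = p).card,
    Nat.cast_pos.2 (Finset.card_pos.2 ⟨1, by simp⟩), fun v hv => ?_⟩
  have hmaps (σ : youngSubgroup b) (_ : σ ∈ Finset.univ) :
      (σ : Perm P) p ∈ ({a | b a = b p} : Finset P) := by simpa using σ.2 p
  rw [subgroupSum, Finset.sum_mul, ← Finset.sum_fiberwise_of_maps_to hmaps, Finset.smul_sum]
  refine Finset.sum_congr rfl fun a ha => ?_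
  have hswap : swap a p ∈ youngSubgroup b := swap_mem_youngSubgroup (Finset.mem_filter.1 ha).2
  have hterm (σ : youngSubgroup b) (hσ : (σ : Perm P) p = a) :
      of K _ (σ : Perm P) * v = of K _ (swap a p) * v := by
    nth_rw 2 [← hv _ (mul_mem hswap σ.2) (by simp [hσ])]
    rw [← mul_assoc, ← map_mul, ← mul_assoc, swap_mul_self, one_mul]
  rw [Finset.sum_congr rfl fun σ hσ => hterm σ (Finset.mem_filter.1 hσ).2, Finset.sum_const,
    Nat.cast_smul_eq_nsmul]
  refine congrArg (· • _) (Finset.card_equiv (Equiv.mulLeft ⟨swap a p, hswap⟩) fun σ => ?_)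
  simp [swap_apply_eq_iff]

theorem coeffForm_add_sum_swap_mul_nonneg {b : P → ι} {v : K[Perm P]}
    (hv : ∀ σ ∈ youngSubgroup b, of K _ σ * v = v) {a : P} {i : ι} (ha : b a ≠ i) :
    0 ≤ coeffForm K _ v (v + ∑ q with b q = i, of K _ (swap q a) * v) := by
  obtain ⟨r, hr, h⟩ := exists_subgroupSum_youngSubgroup_mul_eq K (Function.update b a i) a
  have hnonneg := coeffForm_subgroupSum_mul_nonneg (H := youngSubgroup (Function.update b a i)) v
  have hv' : ∀ σ ∈ youngSubgroup (Function.update b a i), σ a = a → of K _ σ * v = v :=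
    fun σ hσ hσa => hv σ (by simpa using mem_youngSubgroup_update hσ hσa (b a))
  have horbit : ({q | Function.update b a i q = Function.update b a i a} : Finset P) =
      insert a (Finset.univ.filter (b · = i)) := by
    ext q
    rcases eq_or_ne q a with rfl | hq <;> simp [*]
  rw [h v hv', horbit, Finset.sum_insert (by simpa using ha),
    swap_self, ← Perm.one_def, map_one, one_mul, map_smul, smul_eq_mul] at hnonneg
  exact nonneg_of_mul_nonneg_right hnonneg hr

theorem add_sum_swap_mul_eq_zero {b : P → ι} {p q : P} {i : ι} {v : K[Perm P]}
    (hv : ∀ σ ∈ youngSubgroup (Function.update b p i), of K _ σ * v = v)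
    (h : subgroupSum K (youngSubgroup b) * v = 0) (hpi : b p ≠ i)
    (hq : Function.update b p i q = i) :
    v + ∑ a ∈ ({a | b a = b p} : Finset P).erase p, of K _ (swap q a) * v = 0 := by
  obtain ⟨r, hr, hsum⟩ := exists_subgroupSum_youngSubgroup_mul_eq K b p
  have hswap : swap q p ∈ youngSubgroup (Function.update b p i) :=
    swap_mem_youngSubgroup (by rw [hq, Function.update_self])
  rw [hsum v fun σ hσ hσp => hv σ (mem_youngSubgroup_update hσ hσp i), smul_eq_zero,
    or_iff_right hr.ne', ← Finset.add_sum_erase (a := p) _ _ (by simp), swap_self,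
    ← Perm.one_def, map_one, one_mul] at h
  rw [← mul_zero (of K _ (swap q p)), ← h, mul_add, hv _ hswap, Finset.mul_sum]
  congr 1
  refine Finset.sum_congr rfl fun a ha => ?_
  obtain ⟨hap, ha⟩ := Finset.mem_erase.1 ha
  have haq : a ≠ q := by
    rintro rfl
    rw [Function.update_of_ne hap, (Finset.mem_filter.1 ha).2] at hq
    exact hpi hq
  have hconj : swap q a = swap q p * swap a p * swap q p := by
    rw [swap_comm q p, swap_mul_swap_mul_swap hap haq]
  rw [hconj, map_mul (of K _), map_mul (of K _), mul_assoc, mul_assoc, hv _ hswap]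

theorem card_erase_lt_card_update {b : P → ι} {p : P} {i : ι} (hpi : b p ≠ i)
    (hcard : Fintype.card {q // b q = b p} = Fintype.card {q // b q = i}) :
    (({a | b a = b p} : Finset P).erase p).card <
      (Finset.univ.filter fun q => Function.update b p i q = i).card := by
  rw [Fintype.card_subtype, Fintype.card_subtype] at hcard
  refine (Finset.card_erase_lt_of_mem (by simp)).trans_le (hcard.trans_le ?_)
  refine Finset.card_le_card fun q hq => ?_
  rcases eq_or_ne q p with rfl | hqp <;> simp_all

theorem eq_zero_of_subgroupSum_youngSubgroup_mul_eq_zero {b : P → ι} {p : P} {i : ι}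
    {v : K[Perm P]} (hpi : b p ≠ i)
    (hcard : Fintype.card {q // b q = b p} = Fintype.card {q // b q = i})
    (hv : ∀ σ ∈ youngSubgroup (Function.update b p i), of K _ σ * v = v)
    (h : subgroupSum K (youngSubgroup b) * v = 0) : v = 0 := by
  set b' := Function.update b p i
  set A := ({a | b a = b p} : Finset P).erase p
  set B : Finset P := {q | b' q = i}
  -- Both sums run over the same transpositions, so `(|A| - |B|) ⟨v, v⟩ ≥ 0`, while `|A| < |B|`.
  have hA : 0 ≤ ∑ a ∈ A, coeffForm K _ v (v + ∑ q ∈ B, of K _ (swap q a) * v) := by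
    refine Finset.sum_nonneg fun a ha => coeffForm_add_sum_swap_mul_nonneg hv ?_
    obtain ⟨hap, ha⟩ := Finset.mem_erase.1 ha
    rwa [show b' a = b a from Function.update_of_ne hap _ _, (Finset.mem_filter.1 ha).2]
  have hB : ∑ q ∈ B, coeffForm K _ v (v + ∑ a ∈ A, of K _ (swap q a) * v) = 0 :=
    Finset.sum_eq_zero fun q hq => by
      rw [add_sum_swap_mul_eq_zero hv h hpi (Finset.mem_filter.1 hq).2, map_zero]
  simp only [map_add, map_sum, Finset.sum_add_distrib, Finset.sum_const, nsmul_eq_mul] at hA hB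
  rw [Finset.sum_comm] at hB
  have hlt : (A.card : K) < B.card := Nat.cast_lt.2 (card_erase_lt_card_update hpi hcard)
  refine coeffForm_self_eq_zero.1 (le_antisymm ?_ (coeffForm_self_nonneg v))
  refine nonpos_of_mul_nonpos_right ?_ (sub_pos.2 hlt)
  linarith

theorem exists_subgroupSum_mul_subgroupSum_mul_eq (K : Type*) [Field K] [LinearOrder K]
    [IsStrictOrderedRing K] {b : P → ι} {p : P} {i : ι} (hpi : b p ≠ i)
    (hcard : Fintype.card {q // b q = b p} = Fintype.card {q // b q = i}) :
    ∃ y ∈ Algebra.adjoin K {subgroupSum K (youngSubgroup b),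
        subgroupSum K (youngSubgroup (Function.update b p i))},
      subgroupSum K (youngSubgroup (Function.update b p i)) * subgroupSum K (youngSubgroup b) * y =
        subgroupSum K (youngSubgroup (Function.update b p i)) := by
  set Y' := youngSubgroup (Function.update b p i)
  set e := subgroupSum K (youngSubgroup b)
  set f := subgroupSum K Y'
  have hinj : ∀ r ∈ Algebra.adjoin K {f * e * f}, f * e * f * (r * f) = 0 → r * f = 0 := by
    intro r hr hrf
    have hcomm : f * r = r * f := by
      have hs : f * e * f ∈ Subalgebra.centralizer K {f} := by
        rintro _ rfl
        rw [← mul_assoc, ← mul_assoc, mul_assoc (f * e), subgroupSum_mul_self, smul_mul_assoc,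
          mul_smul_comm, smul_mul_assoc]
      exact Subalgebra.mem_centralizer_iff K |>.1
        (Algebra.adjoin_le (Set.singleton_subset_iff.2 hs) hr) f rfl
    have hinv : ∀ σ ∈ Y', of K _ σ * (r * f) = r * f := fun σ hσ => by
      rw [← hcomm, ← mul_assoc, of_mul_subgroupSum hσ]
    have hfv : f * (r * f) = (Fintype.card Y' : K) • (r * f) := subgroupSum_mul_of_forall hinv
    refine eq_zero_of_subgroupSum_youngSubgroup_mul_eq_zero hpi hcard hinv
      (subgroupSum_mul_eq_zero ?_)
    have hcardY' : (Fintype.card Y' : K) ≠ 0 := Nat.cast_ne_zero.2 Fintype.card_ne_zero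
    have h : (Fintype.card Y' : K) * (Fintype.card Y' * coeffForm K _ (r * f) (e * (r * f))) = 0 :=
      calc _ = coeffForm K _ (f * (r * f)) (e * (f * (r * f))) := by
            rw [hfv, map_smul, LinearMap.smul_apply, mul_smul_comm, map_smul, smul_eq_mul,
              smul_eq_mul]
        _ = coeffForm K _ (r * f) (f * e * f * (r * f)) := by
            rw [coeffForm_mul_left, antipode_subgroupSum]
            simp only [f, mul_assoc]
        _ = 0 := by rw [hrf, map_zero]
    simpa [hcardY'] using h
  obtain ⟨r, hr, h⟩ := exists_mem_adjoin_singleton_mul_mul_eq hinj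
  have he : e ∈ Algebra.adjoin K {e, f} := Algebra.subset_adjoin (by simp)
  have hf : f ∈ Algebra.adjoin K {e, f} := Algebra.subset_adjoin (by simp)
  have hr' : r ∈ Algebra.adjoin K {e, f} :=
    Algebra.adjoin_le (Set.singleton_subset_iff.2 (mul_mem (mul_mem hf he) hf)) hr
  exact ⟨f * (r * f), mul_mem hf (mul_mem hr' hf), by simpa only [mul_assoc] using h⟩

end Positivity

/-! ### Generation by permutations of three blocks -/

section Generation

open Equiv Equiv.Perm
open MonoidAlgebra (of)
open scoped MonoidAlgebra

variable {K P ι : Type*} {b : P → ι} {B : Finset ι}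

theorem mul_mul_mem_doubleCoset_of_disjoint [Finite P] {w₁ w₂ σ : Perm P} (hd : Disjoint w₁ w₂)
    (hσ : σ ∈ youngSubgroup b) (h : ∀ q, w₂ q ≠ q → w₁ (σ q) = σ q) :
    w₁ * σ * w₂ ∈ DoubleCoset.doubleCoset (w₁ * w₂) (youngSubgroup b : Set (Perm P))
      (youngSubgroup b) := by
  classical
  obtain ⟨τ, hτ, hτS⟩ : ∃ τ ∈ youngSubgroup b,
      ∀ q ∈ {q | w₁ q ≠ q ∨ w₂ (σ⁻¹ q) ≠ σ⁻¹ q}, τ q = if w₁ q = q then σ⁻¹ q else q := by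
    refine exists_mem_youngSubgroup_eqOn (Set.toFinite _) (fun p hp q hq hpq => ?_) fun p _ => ?_
    · by_cases hp₁ : w₁ p = p <;> by_cases hq₁ : w₁ q = q <;>
        simp only [hp₁, hq₁, if_true, if_false] at hpq
      · exact σ⁻¹.injective hpq
      · exact absurd (hpq ▸ (hd q).resolve_left hq₁) (hp.resolve_left (not_not.2 hp₁))
      · exact absurd (hpq ▸ (hd p).resolve_left hp₁) (hq.resolve_left (not_not.2 hq₁))
      · exact hpq
    · split_ifs
      exacts [inv_mem hσ p, rfl]
  have hτ₁ : Disjoint τ w₁ := fun q => or_iff_not_imp_right.2 fun hq => by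
    rw [hτS q (Or.inl hq), if_neg hq]
  have hτ₂ : Disjoint (τ * σ) w₂ := fun q => or_iff_not_imp_right.2 fun hq => by
    have hσq : σ⁻¹ (σ q) = q := symm_apply_apply σ q
    rw [Perm.mul_apply, hτS _ (Or.inr (by rwa [hσq])), if_pos (h q hq), hσq]
  refine DoubleCoset.mem_doubleCoset.2 ⟨τ⁻¹, inv_mem hτ, τ * σ, mul_mem hτ hσ, ?_⟩
  rw [mul_assoc _ (w₁ * w₂), mul_assoc w₁ w₂, ← hτ₂.commute.eq, mul_assoc τ, ← mul_assoc w₁,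
    ← hτ₁.commute.eq]
  group

variable [Fintype P] [DecidableEq P] [DecidableEq ι]

theorem card_displaced_mul_mul_lt {w₁ w₂ σ : Perm P} (hσ : σ ∈ youngSubgroup b) {r : P}
    (hr₂ : w₂ r ≠ r) (hr₁ : w₁ (σ (w₂ r)) ≠ σ (w₂ r)) :
    (displaced b (w₁ * σ * w₂)).card < w₁.support.card + w₂.support.card := by
  set T := w₁.support.map (σ * w₂).symm.toEmbedding
  have hT {q : P} : q ∈ T ↔ w₁ (σ (w₂ q)) ≠ σ (w₂ q) := by
    rw [Finset.mem_map_equiv, Equiv.symm_symm, mem_support, Perm.mul_apply]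
  have hsub : displaced b (w₁ * σ * w₂) ⊆ T ∪ w₂.support := by
    intro q hq
    rw [Finset.mem_union, hT, mem_support, or_iff_not_imp_left, not_not]
    intro hq₁ hq₂
    exact mem_displaced.1 hq (by rw [Perm.mul_apply, Perm.mul_apply, hq₁, hσ, hq₂])
  have hinter : (T ∩ w₂.support).Nonempty :=
    ⟨r, Finset.mem_inter.2 ⟨hT.2 hr₁, mem_support.2 hr₂⟩⟩
  calc (displaced b (w₁ * σ * w₂)).card ≤ (T ∪ w₂.support).card := Finset.card_le_card hsub
    _ < T.card + w₂.support.card := by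
      rw [← Finset.card_union_add_card_inter]
      exact Nat.lt_add_of_pos_right hinter.card_pos
    _ = w₁.support.card + w₂.support.card := by rw [Finset.card_map]

section Field

variable [Field K] [CharZero K] {N : Submodule K K[Perm P]}

theorem IsHeckeClosed.of_mul_mem_of_disjoint (hN : IsHeckeClosed (youngSubgroup b) N)
    {w₁ w₂ : Perm P} (hd : Disjoint w₁ w₂) (hw₁ : w₁ ∈ movingBlocks b B)
    (hw₂ : w₂ ∈ movingBlocks b B) (hr₁ : IsBlockReduced b w₁) (hr₂ : IsBlockReduced b w₂)
    (h₁ : w₁ ≠ 1) (h₂ : w₂ ≠ 1)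
    (ih : ∀ v ∈ movingBlocks b B, (displaced b v).card < (w₁ * w₂).support.card → of K _ v ∈ N) :
    of K _ (w₁ * w₂) ∈ N := by
  rw [hd.card_support_mul] at ih
  have hpos {w : Perm P} (hw : w ≠ 1) : 0 < w.support.card :=
    (Nat.zero_lt_two).trans_le (two_le_card_support_of_ne_one hw)
  have hmem₁ : of K _ w₁ ∈ N := ih w₁ hw₁ (by
    rw [hr₁.displaced_eq_support]; exact Nat.lt_add_of_pos_right (hpos h₂))
  have hmem₂ : of K _ w₂ ∈ N := ih w₂ hw₂ (by
    rw [hr₂.displaced_eq_support]; exact Nat.lt_add_of_pos_left (hpos h₁))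
  have hsum := hN.mul_subgroupSum_mul_mem hmem₁ hmem₂
  rw [of_mul_subgroupSum_mul_of] at hsum
  refine hN.of_mem_of_sum_mem hsum (fun σ => ?_) ⟨1, by simp⟩
  by_cases h : ∃ r, w₂ r ≠ r ∧ w₁ ((σ : Perm P) (w₂ r)) ≠ (σ : Perm P) (w₂ r)
  · obtain ⟨r, hr, hr'⟩ := h
    exact Or.inl (ih _ (mul_mem (mul_mem hw₁ (mem_movingBlocks_of_mem_youngSubgroup σ.2 B)) hw₂)
      (card_displaced_mul_mul_lt σ.2 hr hr'))
  · push Not at h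
    refine Or.inr (mul_mul_mem_doubleCoset_of_disjoint hd σ.2 fun q hq => ?_)
    have hwq : w₂ (w₂⁻¹ q) = q := apply_symm_apply w₂ q
    have hne : w₂ (w₂⁻¹ q) ≠ w₂⁻¹ q := hwq.trans_ne fun h' => hq (inv_eq_iff_eq.1 h'.symm).symm
    simpa only [hwq] using h _ hne

theorem IsHeckeClosed.of_mem_of_not_isCycle (hN : IsHeckeClosed (youngSubgroup b) N) {w : Perm P}
    (hwB : w ∈ movingBlocks b B) (hw : IsBlockReduced b w) (hw₁ : w ≠ 1) (hcycle : ¬ w.IsCycle)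
    (ih : ∀ v ∈ movingBlocks b B, (displaced b v).card < w.support.card → of K _ v ∈ N) :
    of K _ w ∈ N := by
  obtain ⟨p, hp⟩ : ∃ p, w p ≠ p := not_forall.1 fun h => hw₁ (Perm.ext h)
  set c := w.cycleOf p
  have hmem : c ∈ w.cycleFactorsFinset := cycleOf_mem_cycleFactorsFinset_iff.2 (mem_support.2 hp)
  have hd : Disjoint (w * c⁻¹) c := disjoint_mul_inv_of_mem_cycleFactorsFinset hmem
  have hc (q : P) (hq : c q ≠ q) : c q = w q :=
    (mem_cycleFactorsFinset_iff.1 hmem).2 q (mem_support.2 hq)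
  have hwc (q : P) (hq : (w * c⁻¹) q ≠ q) : (w * c⁻¹) q = w q := by
    rw [Perm.mul_apply, inv_eq_iff_eq.2 ((hd q).resolve_left hq).symm]
  have hcc : c.IsCycle := isCycle_cycleOf _ hp
  have hne : w * c⁻¹ ≠ 1 := fun h => hcycle (mul_inv_eq_one.1 h ▸ hcc)
  have hw' : w * c⁻¹ * c = w := inv_mul_cancel_right w c
  rw [← hw'] at ih ⊢
  exact hN.of_mul_mem_of_disjoint hd (mem_movingBlocks_of_forall hwB hwc)
    (mem_movingBlocks_of_forall hwB hc) (hw.of_forall hwc) (hw.of_forall hc) hne hcc.ne_one ih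

theorem IsHeckeClosed.of_mem_of_not_injOn (hN : IsHeckeClosed (youngSubgroup b) N) {w : Perm P}
    (hwB : w ∈ movingBlocks b B) (hw : IsBlockReduced b w) (hcycle : w.IsCycle)
    (hinj : ¬ Set.InjOn b w.support)
    (ih : ∀ v ∈ movingBlocks b B, (displaced b v).card < w.support.card → of K _ v ∈ N) :
    of K _ w ∈ N := by
  obtain ⟨x, hx, y, hy, hb, hxy⟩ : ∃ x, w x ≠ x ∧ ∃ y, w y ≠ y ∧ b x = b y ∧ x ≠ y := by
    simpa [Set.InjOn] using hinj
  have hswap : swap x y ∈ youngSubgroup b := swap_mem_youngSubgroup hb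
  have hred : IsBlockReduced b (w * swap x y) := hw.mul_swap hx hy hb
  have hcard : (w * swap x y).support.card = w.support.card := by
    rw [← hred.displaced_eq_support, ← hw.displaced_eq_support, card_displaced_mul_right hswap]
  have hne : w * swap x y ≠ 1 := fun h => by
    rw [h, Perm.support_one, Finset.card_empty, eq_comm, Finset.card_eq_zero, support_eq_empty_iff]
      at hcard
    exact hcycle.ne_one hcard
  -- A transposition changes the sign, but here not the number of moved points.
  have hnot : ¬ (w * swap x y).IsCycle := fun h => by
    have hsign := h.sign
    rw [hcard, ← hcycle.sign, Perm.sign_mul, sign_swap hxy, mul_neg_one] at hsign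
    exact neg_units_ne_self _ hsign
  refine (hN.of_mem_iff ?_).1 (hN.of_mem_of_not_isCycle
    (mul_mem hwB (mem_movingBlocks_of_mem_youngSubgroup hswap B)) hred hne hnot (hcard ▸ ih))
  exact DoubleCoset.mem_doubleCoset.2 ⟨1, one_mem _, _, hswap, by rw [one_mul]⟩

end Field

end Generation

section ThreeCycle

open Equiv Equiv.Perm
open MonoidAlgebra (of)
open scoped MonoidAlgebra

variable {K P ι : Type*} [DecidableEq P] {b : P → ι} {p₁ p₂ p₃ : P}

/-- The permutation `p₁ ↦ p₂ ↦ p₃ ↦ p₁`, for distinct points `p₁`, `p₂`, `p₃`. -/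
def threeCycle (p₁ p₂ p₃ : P) : Perm P := swap p₁ p₂ * swap p₂ p₃

theorem threeCycle_apply_fst (h₁₂ : p₁ ≠ p₂) (h₁₃ : p₁ ≠ p₃) : threeCycle p₁ p₂ p₃ p₁ = p₂ := by
  rw [threeCycle, Perm.mul_apply, swap_apply_of_ne_of_ne h₁₂ h₁₃, swap_apply_left]

theorem threeCycle_apply_snd (h₁₃ : p₁ ≠ p₃) (h₂₃ : p₂ ≠ p₃) : threeCycle p₁ p₂ p₃ p₂ = p₃ := by
  rw [threeCycle, Perm.mul_apply, swap_apply_left, swap_apply_of_ne_of_ne h₁₃.symm h₂₃.symm]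

theorem threeCycle_apply_trd : threeCycle p₁ p₂ p₃ p₃ = p₁ := by
  rw [threeCycle, Perm.mul_apply, swap_apply_right, swap_apply_right]

theorem threeCycle_apply_of_ne {p : P} (h₁ : p ≠ p₁) (h₂ : p ≠ p₂) (h₃ : p ≠ p₃) :
    threeCycle p₁ p₂ p₃ p = p := by
  rw [threeCycle, Perm.mul_apply, swap_apply_of_ne_of_ne h₂ h₃, swap_apply_of_ne_of_ne h₁ h₂]

theorem mul_inv_threeCycle_apply_of_ne {w : Perm P} {q : P} (h₁ : q ≠ p₁) (h₂ : q ≠ p₂)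
    (h₃ : q ≠ p₃) : (w * (threeCycle p₁ p₂ p₃)⁻¹) q = w q := by
  rw [Perm.mul_apply, inv_eq_iff_eq.2 (threeCycle_apply_of_ne h₁ h₂ h₃).symm]

theorem mul_inv_threeCycle_apply_fst {w : Perm P} :
    (w * (threeCycle p₁ p₂ p₃)⁻¹) p₁ = w p₃ := by
  rw [Perm.mul_apply, inv_eq_iff_eq.2 threeCycle_apply_trd.symm]

theorem mul_inv_threeCycle_apply_snd {w : Perm P} (h₁₂ : p₁ ≠ p₂) (h₁₃ : p₁ ≠ p₃) :
    (w * (threeCycle p₁ p₂ p₃)⁻¹) p₂ = w p₁ := by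
  rw [Perm.mul_apply, inv_eq_iff_eq.2 (threeCycle_apply_fst h₁₂ h₁₃).symm]

theorem mul_inv_threeCycle_apply_trd {w : Perm P} (h₁₃ : p₁ ≠ p₃) (h₂₃ : p₂ ≠ p₃) :
    (w * (threeCycle p₁ p₂ p₃)⁻¹) p₃ = w p₂ := by
  rw [Perm.mul_apply, inv_eq_iff_eq.2 (threeCycle_apply_snd h₁₃ h₂₃).symm]

theorem update_update_update_threeCycle (h₁₂ : p₁ ≠ p₂) (h₁₃ : p₁ ≠ p₃) (h₂₃ : p₂ ≠ p₃) (p : P) :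
    Function.update (Function.update (Function.update b p₁ (b p₃)) p₂ (b p₁)) p₃ (b p₂)
      (threeCycle p₁ p₂ p₃ p) = b p := by
  rcases eq_or_ne p p₁ with rfl | h₁
  · rw [threeCycle_apply_fst h₁₂ h₁₃, Function.update_of_ne h₂₃, Function.update_self]
  rcases eq_or_ne p p₂ with rfl | h₂
  · rw [threeCycle_apply_snd h₁₃ h₂₃, Function.update_self]
  rcases eq_or_ne p p₃ with rfl | h₃
  · rw [threeCycle_apply_trd, Function.update_of_ne h₁₃, Function.update_of_ne h₁₂,
      Function.update_self]
  · rw [threeCycle_apply_of_ne h₁ h₂ h₃, Function.update_of_ne h₃, Function.update_of_ne h₂,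
      Function.update_of_ne h₁]

theorem update_threeCycle_apply {p : P} (h₁ : p ≠ p₁) (h₂ : p ≠ p₂) :
    Function.update b p₁ (b p₃) (threeCycle p₁ p₂ p₃ p) = b p := by
  rcases eq_or_ne p p₃ with rfl | h₃
  · rw [threeCycle_apply_trd, Function.update_self]
  · rw [threeCycle_apply_of_ne h₁ h₂ h₃, Function.update_of_ne h₁]

theorem conj_threeCycle_mem_youngSubgroup (h₁₂ : p₁ ≠ p₂) (h₁₃ : p₁ ≠ p₃) (h₂₃ : p₂ ≠ p₃)
    {τ : Perm P} (hτ : τ ∈ youngSubgroup (Function.update b p₁ (b p₃))) (hτ₂ : τ p₂ = p₂)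
    (hτ₃ : τ p₃ = p₃) :
    (threeCycle p₁ p₂ p₃)⁻¹ * τ * threeCycle p₁ p₂ p₃ ∈ youngSubgroup b := by
  intro p
  have h := mem_youngSubgroup_update (mem_youngSubgroup_update hτ hτ₂ (b p₁)) hτ₃ (b p₂)
    (threeCycle p₁ p₂ p₃ p)
  rw [update_update_update_threeCycle h₁₂ h₁₃ h₂₃] at h
  rw [← h, ← update_update_update_threeCycle (b := b) h₁₂ h₁₃ h₂₃, ← Perm.mul_apply,
    ← Perm.mul_apply, mul_assoc, mul_inv_cancel_left]

theorem apply_eq_of_mem_youngSubgroup_update {i : ι} {τ : Perm P} {p q : P}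
    (hτ : τ ∈ youngSubgroup (Function.update b p i)) (hq : q ≠ p) (hτq : τ q ≠ p) :
    b (τ q) = b q := by
  simpa only [Function.update_of_ne hq, Function.update_of_ne hτq] using hτ q

theorem apply_ne_of_mem_youngSubgroup_update {i : ι} {τ : Perm P} {p q : P}
    (hτ : τ ∈ youngSubgroup (Function.update b p i)) (hq : q ≠ p) (hi : b q ≠ i) : τ q ≠ p :=
  fun h => hi (by simpa only [Function.update_of_ne hq, h, Function.update_self] using (hτ q).symm)

theorem commute_swap_of_apply_eq {v : Perm P} {x y : P} (hx : v x = x) (hy : v y = y) :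
    Commute v (swap x y) := by
  rw [Commute, SemiconjBy, mul_swap_eq_swap_mul, hx, hy]

theorem mul_mul_threeCycle_mem_doubleCoset (h₁₂ : b p₁ ≠ b p₂) (h₁₃ : b p₁ ≠ b p₃)
    (h₂₃ : b p₂ ≠ b p₃) {v : Perm P} (hv : ∀ q, b q = b p₂ ∨ b q = b p₃ → v q = q)
    {τ : Perm P} (hτ : τ ∈ youngSubgroup (Function.update b p₁ (b p₃))) (hτ₃ : τ p₃ ≠ p₁) :
    v * τ * threeCycle p₁ p₂ p₃ ∈ DoubleCoset.doubleCoset (v * threeCycle p₁ p₂ p₃)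
      (youngSubgroup b : Set (Perm P)) (youngSubgroup b) := by
  have n₁₂ : p₁ ≠ p₂ := ne_of_apply_ne b h₁₂
  have n₁₃ : p₁ ≠ p₃ := ne_of_apply_ne b h₁₃
  have n₂₃ : p₂ ≠ p₃ := ne_of_apply_ne b h₂₃
  have hτ₂ : τ p₂ ≠ p₁ := apply_ne_of_mem_youngSubgroup_update hτ n₁₂.symm h₂₃
  have hb₂ : b (τ p₂) = b p₂ := apply_eq_of_mem_youngSubgroup_update hτ n₁₂.symm hτ₂
  have hb₃ : b (τ p₃) = b p₃ := apply_eq_of_mem_youngSubgroup_update hτ n₁₃.symm hτ₃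
  set s := swap p₂ (τ p₂) * swap p₃ (τ p₃)
  have hs : s ∈ youngSubgroup b :=
    mul_mem (swap_mem_youngSubgroup hb₂.symm) (swap_mem_youngSubgroup hb₃.symm)
  have hs' : s ∈ youngSubgroup (Function.update b p₁ (b p₃)) := by
    refine mem_youngSubgroup_update hs ?_ _
    rw [Perm.mul_apply, swap_apply_of_ne_of_ne n₁₃ hτ₃.symm, swap_apply_of_ne_of_ne n₁₂ hτ₂.symm]
  have hvs : Commute v s :=
    (commute_swap_of_apply_eq (hv _ (Or.inl rfl)) (hv _ (Or.inl hb₂))).mul_right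
      (commute_swap_of_apply_eq (hv _ (Or.inr rfl)) (hv _ (Or.inr hb₃)))
  have hsτ₂ : (s⁻¹ * τ) p₂ = p₂ := by
    rw [Perm.mul_apply, inv_eq_iff_eq, Perm.mul_apply, swap_apply_of_ne_of_ne n₂₃
      (ne_of_apply_ne b (by rwa [hb₃])), swap_apply_left]
  have hsτ₃ : (s⁻¹ * τ) p₃ = p₃ := by
    rw [Perm.mul_apply, inv_eq_iff_eq, Perm.mul_apply, swap_apply_left, swap_apply_of_ne_of_ne
      (ne_of_apply_ne b (by rw [hb₃]; exact h₂₃.symm)) (τ.injective.ne n₂₃.symm)]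
  refine DoubleCoset.mem_doubleCoset.2 ⟨s, hs, _, conj_threeCycle_mem_youngSubgroup n₁₂ n₁₃ n₂₃
    (mul_mem (inv_mem hs') hτ) hsτ₂ hsτ₃, ?_⟩
  rw [← mul_assoc s, ← hvs.eq]
  group

theorem threeCycle_mem_movingBlocks [DecidableEq ι] :
    threeCycle p₁ p₂ p₃ ∈ movingBlocks b {b p₁, b p₂, b p₃} := by
  intro q hq
  simp only [Finset.mem_insert, Finset.mem_singleton, not_or] at hq
  rw [threeCycle_apply_of_ne (ne_of_apply_ne b hq.1) (ne_of_apply_ne b hq.2.1)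
    (ne_of_apply_ne b hq.2.2)]

variable [Fintype P]

theorem mul_inv_threeCycle_apply_eq_self {w : Perm P} (hinj : Set.InjOn b w.support)
    (hp₁ : w p₁ = p₂) (hp₂ : w p₂ = p₃) (h₁₂ : p₁ ≠ p₂) (h₁₃ : p₁ ≠ p₃) (h₂₃ : p₂ ≠ p₃) {q : P}
    (hq : b q = b p₂ ∨ b q = b p₃) : (w * (threeCycle p₁ p₂ p₃)⁻¹) q = q := by
  have hm₁ : p₁ ∈ w.support := mem_support.2 (hp₁.trans_ne h₁₂.symm)
  have hm₂ : p₂ ∈ w.support := mem_support.2 (hp₂.trans_ne h₂₃.symm)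
  have hm₃ : p₃ ∈ w.support :=
    mem_support.2 fun h => h₂₃ (w.injective (hp₂.trans h.symm))
  rcases eq_or_ne q p₂ with rfl | hq₂
  · rw [mul_inv_threeCycle_apply_snd h₁₂ h₁₃, hp₁]
  rcases eq_or_ne q p₃ with rfl | hq₃
  · rw [mul_inv_threeCycle_apply_trd h₁₃ h₂₃, hp₂]
  have hq : q ∉ w.support := fun h => hq.elim (hinj.ne h hm₂ hq₂) (hinj.ne h hm₃ hq₃)
  rw [mul_inv_threeCycle_apply_of_ne (ne_of_mem_of_not_mem hm₁ hq).symm hq₂ hq₃,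
    notMem_support.1 hq]

variable [DecidableEq ι]

theorem card_displaced_mul_mul_threeCycle_le (h₁₃ : b p₁ ≠ b p₃) (h₂₃ : b p₂ ≠ b p₃)
    {v τ : Perm P} (hv₁ : v p₁ ≠ p₁) (hτ : τ ∈ youngSubgroup (Function.update b p₁ (b p₃)))
    (hτ₃ : τ p₃ = p₁) :
    (displaced b (v * τ * threeCycle p₁ p₂ p₃)).card ≤ v.support.card + 1 := by
  have n₁₃ : p₁ ≠ p₃ := ne_of_apply_ne b h₁₃
  set u := threeCycle p₁ p₂ p₃
  have hu₂ : u p₂ = p₃ := threeCycle_apply_snd n₁₃ (ne_of_apply_ne b h₂₃)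
  have hsub : displaced b (v * τ * u) ⊆ insert p₁ (v.support.map (τ * u).symm.toEmbedding) := by
    intro q hq
    rw [Finset.mem_insert, Finset.mem_map_equiv, Equiv.symm_symm, mem_support, Perm.mul_apply]
    refine or_iff_not_imp_left.2 fun hq₁ hvq => ?_
    have hq₂ : q ≠ p₂ := by
      rintro rfl
      rw [hu₂, hτ₃] at hvq
      exact hv₁ hvq
    have hτq : τ (u q) ≠ p₁ := hτ₃ ▸ τ.injective.ne (hu₂ ▸ u.injective.ne hq₂)
    have hbq := hτ (u q)
    rw [Function.update_of_ne hτq, update_threeCycle_apply hq₁ hq₂] at hbq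
    exact mem_displaced.1 hq (by rw [Perm.mul_apply, Perm.mul_apply, hvq, hbq])
  calc (displaced b (v * τ * u)).card ≤ _ := Finset.card_le_card hsub
    _ ≤ (v.support.map (τ * u).symm.toEmbedding).card + 1 := Finset.card_insert_le _ _
    _ = v.support.card + 1 := by rw [Finset.card_map]

variable [Field K] [LinearOrder K] [IsStrictOrderedRing K] {N : Submodule K K[Perm P]}

theorem IsHeckeClosed.of_mul_threeCycle_mem (hN : IsHeckeClosed (youngSubgroup b) N)
    (hcard : Fintype.card {q // b q = b p₁} = Fintype.card {q // b q = b p₃}) (h₁₂ : b p₁ ≠ b p₂)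
    (h₁₃ : b p₁ ≠ b p₃) (h₂₃ : b p₂ ≠ b p₃) {v : Perm P}
    (hv : ∀ q, b q = b p₂ ∨ b q = b p₃ → v q = q)
    (hvτ : ∀ τ ∈ youngSubgroup (Function.update b p₁ (b p₃)), of K _ (v * τ) ∈ N)
    (hthree : ∀ x ∈ movingBlocks b {b p₁, b p₂, b p₃}, of K _ x ∈ N)
    (hlow : ∀ τ ∈ youngSubgroup (Function.update b p₁ (b p₃)), τ p₃ = p₁ →
      of K _ (v * τ * threeCycle p₁ p₂ p₃) ∈ N) :
    of K _ (v * threeCycle p₁ p₂ p₃) ∈ N := by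
  obtain ⟨y, hy, hfey⟩ := exists_subgroupSum_mul_subgroupSum_mul_eq K h₁₃ hcard
  set u := threeCycle p₁ p₂ p₃
  have hvf : of K _ v * subgroupSum K (youngSubgroup (Function.update b p₁ (b p₃))) ∈ N := by
    rw [subgroupSum, Finset.mul_sum]
    exact sum_mem fun τ _ => by rw [← map_mul]; exact hvτ τ τ.2
  have hyu : y * of K _ u ∈ N := mul_of_mem_of_mem_adjoin hthree
    threeCycle_mem_movingBlocks <| adjoin_subgroupSum_le_of_le _
      (fun σ hσ => mem_movingBlocks_of_mem_youngSubgroup hσ _)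
      (fun σ hσ => mem_movingBlocks_update (by simp) (by simp) hσ) hy
  have hsum := hN.mul_subgroupSum_mul_mem hvf hyu
  rw [← mul_assoc, mul_assoc (of K _ v), mul_assoc (of K _ v), hfey,
    of_mul_subgroupSum_mul_of] at hsum
  refine hN.of_mem_of_sum_mem hsum (fun τ => ?_) ⟨1, by simp⟩
  by_cases hτ₃ : (τ : Perm P) p₃ = p₁
  · exact Or.inl (hlow τ τ.2 hτ₃)
  · exact Or.inr (mul_mul_threeCycle_mem_doubleCoset h₁₂ h₁₃ h₂₃ hv τ.2 hτ₃)

theorem exists_apply_apply_apply_ne {w : Perm P} (hw : w.IsCycle) (hcard : 3 < w.support.card) :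
    ∃ p, w p ≠ p ∧ w (w p) ≠ p ∧ w (w (w p)) ≠ p := by
  have hw' := hw
  obtain ⟨p, hp, -⟩ := hw'
  have hne (n : ℕ) (h0 : 0 < n) (hn : n < w.support.card) : (w ^ n) p ≠ p := fun h => by
    have hdvd := orderOf_dvd_iff_pow_eq_one.2 ((hw.pow_eq_one_iff' hp).2 h)
    rw [hw.orderOf] at hdvd
    exact hn.not_ge (Nat.le_of_dvd h0 hdvd)
  exact ⟨p, hp, hne 2 two_pos (by lia), hne 3 three_pos hcard⟩

theorem card_support_mul_inv_threeCycle_add_two_le {w : Perm P} (h₁₂ : p₁ ≠ p₂) (h₁₃ : p₁ ≠ p₃)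
    (h₂₃ : p₂ ≠ p₃) (hp₁ : w p₁ = p₂) (hp₂ : w p₂ = p₃) (hp₃ : w p₃ ≠ p₃) :
    (w * (threeCycle p₁ p₂ p₃)⁻¹).support.card + 2 ≤ w.support.card := by
  have hsub : (w * (threeCycle p₁ p₂ p₃)⁻¹).support ⊆ w.support \ {p₂, p₃} := by
    intro q hq
    rw [mem_support] at hq
    have hq₂ : q ≠ p₂ := by
      rintro rfl
      exact hq ((mul_inv_threeCycle_apply_snd h₁₂ h₁₃).trans hp₁)
    have hq₃ : q ≠ p₃ := by
      rintro rfl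
      exact hq ((mul_inv_threeCycle_apply_trd h₁₃ h₂₃).trans hp₂)
    simp only [Finset.mem_sdiff, mem_support, Finset.mem_insert, Finset.mem_singleton, hq₂, hq₃,
      or_self, not_false_eq_true, and_true]
    rcases eq_or_ne q p₁ with rfl | hq₁
    · rw [hp₁]
      exact h₁₂.symm
    · rwa [mul_inv_threeCycle_apply_of_ne hq₁ hq₂ hq₃] at hq
  have hpair : ({p₂, p₃} : Finset P) ⊆ w.support := by
    simpa [Finset.insert_subset_iff, hp₂, h₂₃.symm] using hp₃
  rw [← Finset.card_sdiff_add_card_eq_card hpair, Finset.card_pair h₂₃]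
  exact Nat.add_le_add_right (Finset.card_le_card hsub) 2

theorem mul_inv_threeCycle_mem_movingBlocks {B : Finset ι} {w : Perm P}
    (hwB : w ∈ movingBlocks b B) (hw : IsBlockReduced b w) (hinj : Set.InjOn b w.support)
    (hp₁ : w p₁ = p₂) (hp₂ : w p₂ = p₃) (h₁₂ : p₁ ≠ p₂) (h₁₃ : p₁ ≠ p₃) (h₂₃ : p₂ ≠ p₃) :
    w * (threeCycle p₁ p₂ p₃)⁻¹ ∈ movingBlocks b (B.erase (b p₂)) := by
  intro q hq
  by_cases hq₂ : b q = b p₂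
  · rw [mul_inv_threeCycle_apply_eq_self hinj hp₁ hp₂ h₁₂ h₁₃ h₂₃ (Or.inl hq₂)]
  have hqB : b q ∉ B := fun h => hq (Finset.mem_erase.2 ⟨hq₂, h⟩)
  have hwq : w q = q := not_not.1 fun h => hw q h (hwB q hqB)
  have hq₁ : q ≠ p₁ := by rintro rfl; exact h₁₂ (hwq.symm.trans hp₁)
  have hq₃ : q ≠ p₃ := by rintro rfl; exact h₂₃ (w.injective (hp₂.trans hwq.symm))
  rw [mul_inv_threeCycle_apply_of_ne hq₁ (ne_of_apply_ne b hq₂) hq₃, hwq]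

theorem IsHeckeClosed.of_mem_of_apply_eq (hN : IsHeckeClosed (youngSubgroup b) N)
    (hcard : ∀ p q, Fintype.card {r // b r = b p} = Fintype.card {r // b r = b q})
    {B : Finset ι} (hB : 3 < B.card) {w : Perm P} (hwB : w ∈ movingBlocks b B)
    (hw : IsBlockReduced b w) (hinj : Set.InjOn b w.support)
    (hp₁ : w p₁ = p₂) (hp₂ : w p₂ = p₃) (h₁₂ : p₁ ≠ p₂) (h₁₃ : p₁ ≠ p₃) (h₃ : w p₃ ≠ p₁)
    (ihB : ∀ C : Finset ι, C.card < B.card → ∀ v ∈ movingBlocks b C, of K _ v ∈ N)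
    (ih : ∀ v ∈ movingBlocks b B, (displaced b v).card < w.support.card → of K _ v ∈ N) :
    of K _ w ∈ N := by
  have h₂₃ : p₂ ≠ p₃ := hp₁ ▸ hp₂ ▸ w.injective.ne h₁₂
  have hm₁ : w p₁ ≠ p₁ := hp₁.trans_ne h₁₂.symm
  have hm₂ : w p₂ ≠ p₂ := hp₂.trans_ne h₂₃.symm
  have hm₃ : w p₃ ≠ p₃ := fun h => h₂₃ (w.injective (hp₂.trans h.symm))
  have hbne {x y : P} (hx : w x ≠ x) (hy : w y ≠ y) (hxy : x ≠ y) : b x ≠ b y :=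
    hinj.ne (mem_support.2 hx) (mem_support.2 hy) hxy
  have hbmem {x : P} (hx : w x ≠ x) : b x ∈ B := hw.mem_of_mem_movingBlocks hwB hx
  have hvB := mul_inv_threeCycle_mem_movingBlocks hwB hw hinj hp₁ hp₂ h₁₂ h₁₃ h₂₃
  have hsupp := card_support_mul_inv_threeCycle_add_two_le h₁₂ h₁₃ h₂₃ hp₁ hp₂ hm₃
  have hv₁ : (w * (threeCycle p₁ p₂ p₃)⁻¹) p₁ ≠ p₁ := by rwa [mul_inv_threeCycle_apply_fst]
  rw [← inv_mul_cancel_right w (threeCycle p₁ p₂ p₃)]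
  refine hN.of_mul_threeCycle_mem (hcard p₁ p₃) (hbne hm₁ hm₂ h₁₂) (hbne hm₁ hm₃ h₁₃)
    (hbne hm₂ hm₃ h₂₃)
    (fun q hq => mul_inv_threeCycle_apply_eq_self hinj hp₁ hp₂ h₁₂ h₁₃ h₂₃ hq)
    (fun τ hτ => ?_) (fun x hx => ?_) fun τ hτ hτ₃ => ?_
  · refine ihB _ (Finset.card_erase_lt_of_mem (hbmem hm₂)) _ (mul_mem hvB ?_)
    exact mem_movingBlocks_update (Finset.mem_erase.2 ⟨hbne hm₁ hm₂ h₁₂, hbmem hm₁⟩)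
      (Finset.mem_erase.2 ⟨hbne hm₃ hm₂ h₂₃.symm, hbmem hm₃⟩) hτ
  · exact ihB _ (Finset.card_le_three.trans_lt hB) x hx
  · refine ih _ (mul_mem (mul_mem (movingBlocks_mono (B.erase_subset _) hvB)
      (mem_movingBlocks_update (hbmem hm₁) (hbmem hm₃) hτ)) ?_) ?_
    · refine movingBlocks_mono ?_ threeCycle_mem_movingBlocks
      simp [Finset.insert_subset_iff, hbmem hm₁, hbmem hm₂, hbmem hm₃]
    · have := card_displaced_mul_mul_threeCycle_le (hbne hm₁ hm₃ h₁₃) (hbne hm₂ hm₃ h₂₃) hv₁ hτ hτ₃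
      lia

theorem IsHeckeClosed.of_mem_of_isCycle_of_injOn (hN : IsHeckeClosed (youngSubgroup b) N)
    (hcard : ∀ p q, Fintype.card {r // b r = b p} = Fintype.card {r // b r = b q})
    {B : Finset ι} {w : Perm P} (hwB : w ∈ movingBlocks b B) (hw : IsBlockReduced b w)
    (hcycle : w.IsCycle) (hinj : Set.InjOn b w.support) (hlt : 3 < w.support.card)
    (ihB : ∀ C : Finset ι, C.card < B.card → ∀ v ∈ movingBlocks b C, of K _ v ∈ N)
    (ih : ∀ v ∈ movingBlocks b B, (displaced b v).card < w.support.card → of K _ v ∈ N) :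
    of K _ w ∈ N := by
  obtain ⟨p₁, h₁, h₂, h₃⟩ := exists_apply_apply_apply_ne hcycle hlt
  obtain ⟨p₂, hp₂⟩ : ∃ p, w p₁ = p := ⟨_, rfl⟩
  obtain ⟨p₃, hp₃⟩ : ∃ p, w p₂ = p := ⟨_, rfl⟩
  rw [hp₂] at h₁
  rw [hp₂, hp₃] at h₂ h₃
  have hB : w.support.card ≤ B.card := Finset.card_le_card_of_injOn b
    (fun q hq => hw.mem_of_mem_movingBlocks hwB (mem_support.1 hq)) hinj
  exact hN.of_mem_of_apply_eq hcard (hlt.trans_le hB) hwB hw hinj hp₂ hp₃ h₁.symm h₂.symm h₃ ihB ih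

theorem IsHeckeClosed.of_mem_of_isBlockReduced (hN : IsHeckeClosed (youngSubgroup b) N)
    (hcard : ∀ p q, Fintype.card {r // b r = b p} = Fintype.card {r // b r = b q})
    (hthree : ∀ C : Finset ι, C.card ≤ 3 → ∀ v ∈ movingBlocks b C, of K _ v ∈ N)
    {B : Finset ι} {w : Perm P} (hwB : w ∈ movingBlocks b B) (hw : IsBlockReduced b w)
    (ihB : ∀ C : Finset ι, C.card < B.card → ∀ v ∈ movingBlocks b C, of K _ v ∈ N)
    (ih : ∀ v ∈ movingBlocks b B, (displaced b v).card < w.support.card → of K _ v ∈ N) :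
    of K _ w ∈ N := by
  rcases le_or_gt w.support.card 3 with hle | hlt
  · refine hthree (w.support.image b) (Finset.card_image_le.trans hle) w fun p hp => ?_
    rw [notMem_support.1 fun h => hp (Finset.mem_image_of_mem b h)]
  have hne : w ≠ 1 := by
    rintro rfl
    simp at hlt
  by_cases hcycle : w.IsCycle
  · by_cases hinj : Set.InjOn b w.support
    · exact hN.of_mem_of_isCycle_of_injOn hcard hwB hw hcycle hinj hlt ihB ih
    · exact hN.of_mem_of_not_injOn hwB hw hcycle hinj ih
  · exact hN.of_mem_of_not_isCycle hwB hw hne hcycle ih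

theorem IsHeckeClosed.of_mem_of_mem_movingBlocks (hN : IsHeckeClosed (youngSubgroup b) N)
    (hcard : ∀ p q, Fintype.card {r // b r = b p} = Fintype.card {r // b r = b q})
    (hthree : ∀ C : Finset ι, C.card ≤ 3 → ∀ v ∈ movingBlocks b C, of K _ v ∈ N) {B : Finset ι}
    {w : Perm P} (hw : w ∈ movingBlocks b B) : of K _ w ∈ N := by
  induction hn : B.card using Nat.strong_induction_on generalizing B w with
  | _ n ihB =>
  subst hn
  induction hm : (displaced b w).card using Nat.strong_induction_on generalizing w with
  | _ m ih =>
  subst hm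
  obtain ⟨σ, hσ, hred⟩ := exists_isBlockReduced_mul b w
  refine (hN.of_mem_iff (DoubleCoset.mem_doubleCoset.2 ⟨σ, hσ, 1, one_mem _, (mul_one _).symm⟩)).1
    (hN.of_mem_of_isBlockReduced hcard hthree
      (mul_mem (mem_movingBlocks_of_mem_youngSubgroup hσ B) hw) hred
      (fun C hC v hv => ihB _ hC hv rfl) fun v hv hlt => ih _ ?_ hv rfl)
  rwa [← hred.displaced_eq_support, displaced_mul_left hσ] at hlt

theorem IsHeckeClosed.eq_top (hN : IsHeckeClosed (youngSubgroup b) N)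
    (hcard : ∀ p q, Fintype.card {r // b r = b p} = Fintype.card {r // b r = b q})
    (hthree : ∀ C : Finset ι, C.card ≤ 3 → ∀ v ∈ movingBlocks b C, of K _ v ∈ N) : N = ⊤ := by
  refine eq_top_iff.2 fun x _ => ?_
  induction x using MonoidAlgebra.induction_on with
  | of w =>
    exact hN.of_mem_of_mem_movingBlocks hcard hthree (B := Finset.univ.image b)
      fun p hp => absurd (Finset.mem_image_of_mem b (Finset.mem_univ p)) hp
  | add _ _ hx hy => exact add_mem (hx trivial) (hy trivial)
  | smul r _ hx => exact N.smul_mem r (hx trivial)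

end ThreeCycle

/-! ### Minors and words -/

section Minors

open Equiv Equiv.Perm Function

variable {k : Type*} {t m n : ℕ}

theorem sort_comp_perm_of_injective {α : Type*} [LinearOrder α] {A : Fin t → α} (hA : Injective A)
    (ρ : Perm (Fin t)) : Tuple.sort (A ∘ ρ) = ρ⁻¹ * Tuple.sort A := by
  rw [eq_inv_mul_iff_mul_eq]
  exact Equiv.ext fun a => hA (congrFun Tuple.comp_perm_comp_sort_eq_comp_sort a)

theorem comp_sort_eq_orderEmbOfFin {α : Type*} [LinearOrder α] {A : Fin t → α} (hA : Injective A)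
    (h : (Finset.univ.map ⟨A, hA⟩).card = t) :
    A ∘ Tuple.sort A = (Finset.univ.map ⟨A, hA⟩).orderEmbOfFin h :=
  Finset.orderEmbOfFin_unique h (by simp)
    ((Tuple.monotone_sort A).strictMono_of_injective (hA.comp (Tuple.sort A).injective))

/-- The index of the minor whose rows and columns are the values of `A` and `C`. -/
def minorIndexOf (A : Fin t → Fin m) (C : Fin t → Fin n) (hA : Injective A) (hC : Injective C) :
    MinorIndex t m n :=
  ⟨(Finset.univ.map ⟨A, hA⟩, Finset.univ.map ⟨C, hC⟩), by simp, by simp⟩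

theorem minorIndexOf_comp_perm (A : Fin t → Fin m) (C : Fin t → Fin n) (hA : Injective A)
    (hC : Injective C) (ρ τ : Perm (Fin t)) :
    minorIndexOf (A ∘ ρ) (C ∘ τ) (hA.comp ρ.injective) (hC.comp τ.injective) =
      minorIndexOf A C hA hC := by
  have h {l : ℕ} (f : Fin t → Fin l) (σ : Perm (Fin t)) (hf : Injective f) :
      Finset.univ.map ⟨f ∘ σ, hf.comp σ.injective⟩ = Finset.univ.map ⟨f, hf⟩ :=
    Finset.coe_injective (by simp [← Function.comp_def])
  exact Subtype.ext (Prod.ext (h A ρ hA) (h C τ hC))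

section CommRing

variable [CommRing k]

open Classical in
/-- The indeterminate `y_{A,C}` for sequences `A` of row indices and `C` of column indices, extended
alternatingly from increasing sequences: it is `± y_{I,J}` when `A` and `C` enumerate `I` and `J`,
and `0` when an index is repeated. -/
noncomputable def alternatingVariable (k : Type*) [CommRing k] (A : Fin t → Fin m)
    (C : Fin t → Fin n) : MvPolynomial (MinorIndex t m n) k :=
  if h : Injective A ∧ Injective C then
    (sign (Tuple.sort A) * sign (Tuple.sort C)) • X (minorIndexOf A C h.1 h.2)
  else 0

theorem alternatingVariable_comp_perm (A : Fin t → Fin m) (C : Fin t → Fin n)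
    (ρ τ : Perm (Fin t)) :
    alternatingVariable k (A ∘ ρ) (C ∘ τ) = (sign ρ * sign τ) • alternatingVariable k A C := by
  by_cases h : Injective A ∧ Injective C
  · have h' : Injective (A ∘ ρ) ∧ Injective (C ∘ τ) :=
      ⟨h.1.comp ρ.injective, h.2.comp τ.injective⟩
    rw [alternatingVariable, dif_pos h', alternatingVariable, dif_pos h,
      minorIndexOf_comp_perm _ _ h.1 h.2, sort_comp_perm_of_injective h.1,
      sort_comp_perm_of_injective h.2, smul_smul]
    simp only [Perm.sign_mul, sign_inv, mul_mul_mul_comm]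
  · have h' : ¬(Injective (A ∘ ρ) ∧ Injective (C ∘ τ)) := by
      rwa [ρ.injective_comp, τ.injective_comp]
    rw [alternatingVariable, dif_neg h', alternatingVariable, dif_neg h, smul_zero]

theorem totalDegree_alternatingVariable_le (A : Fin t → Fin m) (C : Fin t → Fin n) :
    (alternatingVariable k A C).totalDegree ≤ 1 := by
  rw [alternatingVariable]
  split_ifs
  · exact (totalDegree_smul_le _ _).trans (isHomogeneous_X k _).totalDegree_le
  · simp

theorem alternatingVariable_orderEmbOfFin (p : MinorIndex t m n) :
    alternatingVariable k (p.1.1.orderEmbOfFin p.2.1) (p.1.2.orderEmbOfFin p.2.2) = X p := by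
  have h : Injective (p.1.1.orderEmbOfFin p.2.1) ∧ Injective (p.1.2.orderEmbOfFin p.2.2) :=
    ⟨(p.1.1.orderEmbOfFin p.2.1).injective, (p.1.2.orderEmbOfFin p.2.2).injective⟩
  have hp : minorIndexOf _ _ h.1 h.2 = p :=
    Subtype.ext (Prod.ext (Finset.map_orderEmbOfFin_univ _ p.2.1)
      (Finset.map_orderEmbOfFin_univ _ p.2.2))
  rw [alternatingVariable, dif_pos h, hp,
    Tuple.sort_eq_refl_iff_monotone.2 (p.1.1.orderEmbOfFin p.2.1).monotone,
    Tuple.sort_eq_refl_iff_monotone.2 (p.1.2.orderEmbOfFin p.2.2).monotone, sign_refl, one_mul,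
    one_smul]

theorem det_submatrix_eq_zero {ι α β : Type*} [Fintype ι] [DecidableEq ι] (M : Matrix α β k)
    {A : ι → α} {C : ι → β} (h : ¬(Injective A ∧ Injective C)) : (M.submatrix A C).det = 0 := by
  rcases not_and_or.1 h with h | h
  · obtain ⟨a, b, hab, hne⟩ := not_injective_iff.1 h
    exact Matrix.det_zero_of_row_eq hne (funext fun c => by simp [hab])
  · obtain ⟨a, b, hab, hne⟩ := not_injective_iff.1 h
    exact Matrix.det_zero_of_column_eq hne fun c => by simp [hab]

theorem det_submatrix_comp_perm {ι α β : Type*} [Fintype ι] [DecidableEq ι] (M : Matrix α β k)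
    (A : ι → α) (C : ι → β) (ρ τ : Perm ι) :
    (M.submatrix (A ∘ ρ) (C ∘ τ)).det = (sign ρ * sign τ) • (M.submatrix A C).det := by
  rw [← Matrix.submatrix_submatrix, ← Function.id_comp ρ, ← Function.comp_id τ,
    ← Matrix.submatrix_submatrix, Matrix.det_permute, Matrix.det_permute', Units.smul_def,
    zsmul_eq_mul]
  push_cast
  ring

theorem minorPresentation_X_minorIndexOf (A : Fin t → Fin m) (C : Fin t → Fin n) (hA : Injective A)
    (hC : Injective C) :
    minorPresentation k t m n (X (minorIndexOf A C hA hC)) =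
      ((Matrix.mvPolynomialX (Fin m) (Fin n) k).submatrix (A ∘ Tuple.sort A)
        (C ∘ Tuple.sort C)).det := by
  rw [comp_sort_eq_orderEmbOfFin hA (by simp), comp_sort_eq_orderEmbOfFin hC (by simp),
    minorPresentation, aeval_X]
  rfl

theorem minorPresentation_alternatingVariable (A : Fin t → Fin m) (C : Fin t → Fin n) :
    minorPresentation k t m n (alternatingVariable k A C) =
      ((Matrix.mvPolynomialX (Fin m) (Fin n) k).submatrix A C).det := by
  by_cases h : Injective A ∧ Injective C
  · rw [alternatingVariable, dif_pos h, Units.smul_def, map_zsmul,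
      minorPresentation_X_minorIndexOf, ← Units.smul_def, det_submatrix_comp_perm, smul_smul,
      Int.units_mul_self, one_smul]
  · rw [alternatingVariable, dif_neg h, map_zero, det_submatrix_eq_zero _ h]

theorem isHomogeneous_det {σ ι : Type*} [Fintype ι] [DecidableEq ι] {d : ℕ}
    {M : Matrix ι ι (MvPolynomial σ k)} (hM : ∀ i j, (M i j).IsHomogeneous d) :
    M.det.IsHomogeneous (Fintype.card ι * d) := by
  rw [Matrix.det_apply]
  refine IsHomogeneous.sum _ _ _ fun σ _ => ?_
  have h := IsHomogeneous.prod Finset.univ (fun i => M (σ i) i) _ fun i _ => hM (σ i) i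
  rw [Finset.sum_const, Finset.card_univ, smul_eq_mul] at h
  exact (homogeneousSubmodule _ k _).smul_of_tower_mem (sign _ : ℤ) h

theorem isHomogeneous_genericMinor (I : Finset (Fin m)) (J : Finset (Fin n)) (hI : I.card = t)
    (hJ : J.card = t) : (genericMinor k m n t I J hI hJ).IsHomogeneous t := by
  rw [genericMinor]
  simpa only [Fintype.card_fin, mul_one] using
    isHomogeneous_det (M := Matrix.of fun _ _ : Fin t => X _) fun _ _ => isHomogeneous_X k _

end CommRing

theorem minorPresentation_alternatingVariable_ne_zero [CommRing k] {A : Fin t → Fin m}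
    {C : Fin t → Fin n} (h : alternatingVariable k A C ≠ 0) :
    minorPresentation k t m n (alternatingVariable k A C) ≠ 0 := by
  have hk : Nontrivial k := by
    by_contra hk
    rw [not_nontrivial_iff_subsingleton] at hk
    exact h (Subsingleton.elim _ _)
  have hinj : Injective A ∧ Injective C := by
    by_contra hinj
    exact h (dif_neg hinj)
  rw [minorPresentation_alternatingVariable]
  have hdet : ((Matrix.mvPolynomialX (Fin m) (Fin n) k).submatrix A C).det =
      rename (Prod.map A C) (Matrix.mvPolynomialX (Fin t) (Fin t) k).det := by
    rw [AlgHom.map_det]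
    congr 1
    ext1 a b
    simp
  rw [hdet]
  exact fun h0 => Matrix.det_mvPolynomialX_ne_zero (Fin t) k
    (rename_injective _ (hinj.1.prodMap hinj.2) (h0.trans (map_zero _).symm))

end Minors

section Words

open Equiv Equiv.Perm

variable {k κ : Type*} {t m n : ℕ}

theorem exists_perm_of_forall_snd_eq {w : Perm (Fin t × κ)} {i : κ} (h : ∀ a, (w (a, i)).2 = i) :
    ∃ ρ : Perm (Fin t), ∀ a, w (a, i) = (ρ a, i) := by
  have hw (a : Fin t) : w (a, i) = ((w (a, i)).1, i) := Prod.ext rfl (h a)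
  have hinj : Function.Injective fun a => (w (a, i)).1 := fun a c hac => by
    have : w (a, i) = w (c, i) := by rw [hw a, hw c]; exact Prod.ext hac rfl
    exact congrArg Prod.fst (w.injective this)
  exact ⟨Equiv.ofBijective _ (Finite.injective_iff_bijective.1 hinj), hw⟩

theorem alternatingVariable_comp_of_forall [CommRing k] {I : Fin t × κ → Fin m}
    {J : Fin t × κ → Fin n} {i : κ} {w w' : Perm (Fin t × κ)} {ρ τ : Perm (Fin t)}
    (hw : ∀ a, w (a, i) = (ρ a, i)) (hw' : ∀ a, w' (a, i) = (τ a, i)) :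
    alternatingVariable k (fun a => I (w (a, i))) (fun a => J (w' (a, i))) =
      (sign ρ * sign τ) • alternatingVariable k (fun a => I (a, i)) (fun a => J (a, i)) := by
  simp only [hw, hw', ← alternatingVariable_comp_perm]
  rfl

variable [Fintype κ]

/-- The monomial in the indeterminates `y` with factors indexed by `κ`, whose rows and columns are
read off from the fillings `I` and `J` of the boxes `Fin t × κ`. -/
noncomputable def wordMonomial (k : Type*) [CommRing k] (I : Fin t × κ → Fin m)
    (J : Fin t × κ → Fin n) : MvPolynomial (MinorIndex t m n) k :=
  ∏ i, alternatingVariable k (fun a => I (a, i)) (fun a => J (a, i))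

/-- The monomial `∏ x_{I p, J p}` of a two-rowed word. -/
noncomputable def biwordMonomial {P : Type*} [Fintype P] (k : Type*) [CommRing k] (I : P → Fin m)
    (J : P → Fin n) : MvPolynomial (Fin m × Fin n) k :=
  ∏ p, X (I p, J p)

section CommRing

variable [CommRing k]

theorem biwordMonomial_comp_perm {P : Type*} [Fintype P] (I : P → Fin m) (J : P → Fin n)
    (w : Perm P) : biwordMonomial k (I ∘ w) (J ∘ w) = biwordMonomial k I J :=
  Equiv.prod_comp w fun p => (X (I p, J p) : MvPolynomial (Fin m × Fin n) k)

theorem biwordMonomial_comp_right {P : Type*} [Fintype P] (I : P → Fin m) (J : P → Fin n)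
    (w : Perm P) : biwordMonomial k I (J ∘ w) = biwordMonomial k (I ∘ ⇑w⁻¹) J := by
  rw [← biwordMonomial_comp_perm (I ∘ ⇑w⁻¹) J w]
  simp [Function.comp_assoc]

variable [DecidableEq κ]

theorem prod_det_eq_sum_youngSubgroup {ι : Type*} [Fintype ι] [DecidableEq ι]
    (M : κ → Matrix ι ι k) :
    ∏ i, (M i).det = ∑ σ : youngSubgroup (Prod.snd : ι × κ → κ),
      sign (σ : Perm (ι × κ)) • ∏ p, M p.2 ((σ : Perm (ι × κ)) p).1 p.1 := by
  rw [← Matrix.det_blockDiagonal, Matrix.det_apply]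
  refine (Fintype.sum_of_injective Subtype.val Subtype.val_injective _ _ (fun σ hσ => ?_)
    fun σ => ?_).symm
  · rw [Subtype.range_coe] at hσ
    obtain ⟨p, hp⟩ := not_forall.1 hσ
    have h0 : ∏ q, Matrix.blockDiagonal M (σ q) q = 0 :=
      Finset.prod_eq_zero (Finset.mem_univ p) (Matrix.blockDiagonal_apply_ne M _ _ hp)
    rw [h0, smul_zero]
  · have hp (p : ι × κ) : M p.2 ((σ : Perm (ι × κ)) p).1 p.1 =
        Matrix.blockDiagonal M ((σ : Perm (ι × κ)) p) p := by
      rw [Matrix.blockDiagonal_apply, if_pos (σ.2 p), σ.2 p]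
    simp only [hp]

theorem minorPresentation_wordMonomial (I : Fin t × κ → Fin m) (J : Fin t × κ → Fin n) :
    minorPresentation k t m n (wordMonomial k I J) =
      ∑ σ : youngSubgroup (Prod.snd : Fin t × κ → κ),
        sign (σ : Perm (Fin t × κ)) • biwordMonomial k (I ∘ σ) J := by
  simp only [wordMonomial, map_prod, minorPresentation_alternatingVariable]
  rw [prod_det_eq_sum_youngSubgroup]
  refine Finset.sum_congr rfl fun σ _ => ?_
  congr 1
  refine Finset.prod_congr rfl fun p _ => ?_
  have hp : ((σ : Perm (Fin t × κ)) p).2 = p.2 := σ.2 p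
  rw [Matrix.submatrix_apply, Matrix.mvPolynomialX_apply, Function.comp_apply, ← hp, Prod.mk.eta,
    hp]

theorem minorPresentation_wordMonomial_comp_right (I : Fin t × κ → Fin m) (J : Fin t × κ → Fin n) :
    minorPresentation k t m n (wordMonomial k I J) =
      ∑ σ : youngSubgroup (Prod.snd : Fin t × κ → κ),
        sign (σ : Perm (Fin t × κ)) • biwordMonomial k I (J ∘ σ) := by
  rw [minorPresentation_wordMonomial, ← Equiv.sum_comp (Equiv.inv _)]
  simp only [biwordMonomial_comp_right, Equiv.inv_apply, InvMemClass.coe_inv, sign_inv]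

theorem exists_sign_eq_prod_of_mem_youngSubgroup {σ : Perm (Fin t × κ)}
    (h : σ ∈ youngSubgroup (Prod.snd : Fin t × κ → κ)) :
    ∃ ρ : κ → Perm (Fin t), (∀ i a, σ (a, i) = (ρ i a, i)) ∧ sign σ = ∏ i, sign (ρ i) := by
  choose ρ hρ using fun i => exists_perm_of_forall_snd_eq fun a => h (a, i)
  have hσ : σ = prodCongrLeft ρ := Equiv.ext fun ⟨a, i⟩ => hρ i a
  exact ⟨ρ, hρ, hσ ▸ sign_prodCongrLeft ρ⟩

theorem wordMonomial_comp_of_mem_youngSubgroup {σ τ : Perm (Fin t × κ)}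
    (hσ : σ ∈ youngSubgroup (Prod.snd : Fin t × κ → κ))
    (hτ : τ ∈ youngSubgroup (Prod.snd : Fin t × κ → κ)) (I : Fin t × κ → Fin m)
    (J : Fin t × κ → Fin n) :
    wordMonomial k (I ∘ σ) (J ∘ τ) = (sign σ * sign τ) • wordMonomial k I J := by
  obtain ⟨ρ, hρ, hσρ⟩ := exists_sign_eq_prod_of_mem_youngSubgroup hσ
  obtain ⟨ρ', hρ', hτρ⟩ := exists_sign_eq_prod_of_mem_youngSubgroup hτ
  rw [hσρ, hτρ, ← Finset.prod_mul_distrib, wordMonomial, wordMonomial, ← Finset.prod_smul]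
  exact Finset.prod_congr rfl fun i _ => alternatingVariable_comp_of_forall (hρ i) (hρ' i)

theorem exists_wordMonomial_comp_eq_mul {B : Finset κ} {w w' : Perm (Fin t × κ)}
    (hw : w ∈ movingBlocks Prod.snd B) (hw' : w' ∈ movingBlocks Prod.snd B)
    (I : Fin t × κ → Fin m) (J : Fin t × κ → Fin n) :
    ∃ F : MvPolynomial (MinorIndex t m n) k, F.totalDegree ≤ B.card ∧
      wordMonomial k (I ∘ w) (J ∘ w') =
        F * ∏ i ∈ Bᶜ, alternatingVariable k (fun a => I (a, i)) (fun a => J (a, i)) := by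
  have h (i : κ) (hi : i ∈ Bᶜ) : ∃ u : ℤˣ,
      alternatingVariable k (fun a => I (w (a, i))) (fun a => J (w' (a, i))) =
        u • alternatingVariable k (fun a => I (a, i)) (fun a => J (a, i)) := by
    have hi := Finset.mem_compl.1 hi
    obtain ⟨ρ, hρ⟩ := exists_perm_of_forall_snd_eq fun a => hw (a, i) hi
    obtain ⟨τ, hτ⟩ := exists_perm_of_forall_snd_eq fun a => hw' (a, i) hi
    exact ⟨_, alternatingVariable_comp_of_forall hρ hτ⟩
  choose! u hu using h
  refine ⟨(∏ i ∈ Bᶜ, u i) •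
    ∏ i ∈ B, alternatingVariable k (fun a => I (w (a, i))) (fun a => J (w' (a, i))), ?_, ?_⟩
  · refine ((totalDegree_smul_le _ _).trans (totalDegree_finsetProd _ _)).trans ?_
    simpa using Finset.sum_le_card_nsmul B _ 1 fun i _ => totalDegree_alternatingVariable_le _ _
  · rw [smul_mul_assoc, ← mul_smul_comm, ← Finset.prod_smul, ← Finset.prod_congr rfl hu,
      Finset.prod_mul_prod_compl]
    rfl

end CommRing

end Words

section Relations

open Equiv Equiv.Perm

theorem inv_mem_of_mem_submonoid {G : Type*} [Group G] [Finite G] {M : Submonoid G} {g : G}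
    (hg : g ∈ M) : g⁻¹ ∈ M :=
  Submonoid.powers_le.2 hg <|
    mem_powers_iff_mem_zpowers.2 <| inv_mem <| Subgroup.mem_zpowers g

/-- The ideal generated by the relations of degree at most `D` among the `t`-minors. -/
noncomputable def relationsOfDegreeLE (k : Type*) [CommRing k] (t m n D : ℕ) :
    Ideal (MvPolynomial (MinorIndex t m n) k) :=
  Ideal.span {x | x ∈ minorRelations k t m n ∧ x.totalDegree ≤ D}

variable {k κ : Type*} {t m n D : ℕ} [CommRing k]

theorem relationsOfDegreeLE_mono {D' : ℕ} (h : D ≤ D') :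
    relationsOfDegreeLE k t m n D ≤ relationsOfDegreeLE k t m n D' :=
  Ideal.span_mono fun _ hx => ⟨hx.1, hx.2.trans h⟩

section

variable [Fintype κ] [DecidableEq κ]

theorem sum_minorPresentation_wordMonomial_comp (v : Perm (Fin t × κ)) (I : Fin t × κ → Fin m)
    (J : Fin t × κ → Fin n) :
    ∑ σ : youngSubgroup (Prod.snd : Fin t × κ → κ),
        sign σ.1 • minorPresentation k t m n (wordMonomial k (I ∘ ⇑(σ.1 * v)) J) =
      ∑ σ : youngSubgroup (Prod.snd : Fin t × κ → κ),
        sign σ.1 •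
          minorPresentation k t m n (wordMonomial k I (J ∘ ⇑(σ.1 * v⁻¹))) := by
  simp only [minorPresentation_wordMonomial, biwordMonomial_comp_right, Finset.smul_sum]
  conv_rhs => rw [Finset.sum_comm]
  refine Finset.sum_congr rfl fun σ _ => ?_
  rw [← Equiv.sum_comp (Equiv.inv _)]
  refine Finset.sum_congr rfl fun τ _ => ?_
  rw [smul_comm, Function.comp_assoc, Function.comp_assoc, ← Perm.coe_mul, ← Perm.coe_mul]
  simp only [Equiv.inv_apply, InvMemClass.coe_inv, sign_inv, mul_inv_rev, inv_inv, mul_assoc]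

end

variable [IsDomain k]

theorem mul_mem_relationsOfDegreeLE {F Q : MvPolynomial (MinorIndex t m n) k}
    (hF : F.totalDegree ≤ D) (h : minorPresentation k t m n (F * Q) = 0)
    (hQ : Q ≠ 0 → minorPresentation k t m n Q ≠ 0) : F * Q ∈ relationsOfDegreeLE k t m n D := by
  rcases eq_or_ne Q 0 with rfl | hQ0
  · rw [mul_zero]
    exact zero_mem _
  · rw [map_mul] at h
    exact Ideal.mul_mem_right _ _
      (Ideal.subset_span ⟨(mul_eq_zero.1 h).resolve_right (hQ hQ0), hF⟩)

variable [Fintype κ] [DecidableEq κ]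

theorem sum_wordMonomial_comp_sub_mem_relationsOfDegreeLE {B : Finset κ} {v : Perm (Fin t × κ)}
    (hv : v ∈ movingBlocks Prod.snd B) (I : Fin t × κ → Fin m) (J : Fin t × κ → Fin n) :
    ∑ σ : youngSubgroup (Prod.snd : Fin t × κ → κ),
        sign σ.1 • wordMonomial k (I ∘ ⇑(σ.1 * v)) J -
      ∑ σ : youngSubgroup (Prod.snd : Fin t × κ → κ),
        sign σ.1 • wordMonomial k I (J ∘ ⇑(σ.1 * v⁻¹)) ∈
      relationsOfDegreeLE k t m n B.card := by
  have hone : (1 : Perm (Fin t × κ)) ∈ movingBlocks Prod.snd B := one_mem _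
  have hmul (σ : youngSubgroup (Prod.snd : Fin t × κ → κ)) {w : Perm (Fin t × κ)}
      (hw : w ∈ movingBlocks Prod.snd B) : σ.1 * w ∈ movingBlocks Prod.snd B :=
    mul_mem (mem_movingBlocks_of_mem_youngSubgroup σ.2 B) hw
  choose F hF hFI using fun σ => exists_wordMonomial_comp_eq_mul (k := k) (hmul σ hv) hone I J
  choose F' hF' hFJ using fun σ =>
    exists_wordMonomial_comp_eq_mul (k := k) hone (hmul σ (inv_mem_of_mem_submonoid hv)) I J
  have hzero := sub_eq_zero.2 (sum_minorPresentation_wordMonomial_comp (k := k) v I J)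
  simp only [← map_zsmul, Units.smul_def, ← map_sum, ← map_sub] at hzero
  simp only [Perm.coe_one, Function.comp_id] at hFI hFJ
  simp only [hFI, hFJ, ← smul_mul_assoc, ← Finset.sum_mul, ← sub_mul, Units.smul_def] at hzero ⊢
  refine mul_mem_relationsOfDegreeLE ((totalDegree_sub _ _).trans (max_le ?_ ?_)) hzero fun h => ?_
  · exact totalDegree_finsetSum_le fun σ _ => (totalDegree_smul_le _ _).trans (hF σ)
  · exact totalDegree_finsetSum_le fun σ _ => (totalDegree_smul_le _ _).trans (hF' σ)
  · rw [map_prod]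
    exact Finset.prod_ne_zero_iff.2 fun i hi =>
      minorPresentation_alternatingVariable_ne_zero (Finset.prod_ne_zero_iff.1 h i hi)

end Relations

section WordCombination

open Equiv Equiv.Perm
open MonoidAlgebra (of)
open scoped MonoidAlgebra

theorem exists_perm_of_sum_single_eq {P R : Type*} [Fintype P] {u v : P → R}
    (h : ∑ p, Finsupp.single (u p) 1 = ∑ p, Finsupp.single (v p) 1) :
    ∃ ρ : Perm P, v ∘ ρ = u := by
  classical
  have hcard (c : R) : Fintype.card {p // u p = c} = Fintype.card {p // v p = c} := by
    have := DFunLike.congr_fun h c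
    simp only [Finsupp.finsetSum_apply, Finsupp.single_apply, Finset.sum_boole, Nat.cast_id] at this
    rw [Fintype.card_subtype, Fintype.card_subtype, this]
  exact ⟨Equiv.ofFiberEquiv fun c => Fintype.equivOfCardEq (hcard c),
    funext fun p => Equiv.ofFiberEquiv_map _ p⟩

theorem exists_linearMap_biwordMonomial {P k V : Type*} {m n : ℕ} [Fintype P] [CommRing k]
    [AddCommGroup V] [Module k V] (Φ : (P → Fin m) → (P → Fin n) → V)
    (hΦ : ∀ I J (ρ : Perm P), Φ (I ∘ ρ) (J ∘ ρ) = Φ I J) :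
    ∃ L : MvPolynomial (Fin m × Fin n) k →ₗ[k] V, ∀ I J, L (biwordMonomial k I J) = Φ I J := by
  let e (u : P → Fin m × Fin n) : Fin m × Fin n →₀ ℕ := ∑ p, Finsupp.single (u p) 1
  let φ (u : P → Fin m × Fin n) : V := Φ (fun p => (u p).1) (fun p => (u p).2)
  have hφ : φ.FactorsThrough e := fun u v huv => by
    obtain ⟨ρ, rfl⟩ := exists_perm_of_sum_single_eq huv
    exact hΦ (fun p => (v p).1) (fun p => (v p).2) ρ
  refine ⟨(basisMonomials _ k).constr k (Function.extend e φ 0), fun I J => ?_⟩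
  have h : biwordMonomial k I J = basisMonomials _ k (e fun p => (I p, J p)) := by
    rw [coe_basisMonomials]
    exact (monomial_sum_one _ _).symm
  rw [h, Module.Basis.constr_basis, hφ.extend_apply]

variable {k κ : Type*} {t m n : ℕ} [Fintype κ] [CommRing k]

/-- The linear combination of word monomials with the given coefficients, where a word is a pair of
fillings of the boxes `Fin t × κ` by row and by column indices, after permuting the boxes by `w` for
the rows and by `w'` for the columns, taken modulo the relations of degree at most three. -/
noncomputable def wordCombination (k : Type*) [CommRing k] (w w' : Perm (Fin t × κ)) :
    ((Fin t × κ → Fin m) × (Fin t × κ → Fin n) →₀ k) →ₗ[k]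
      MvPolynomial (MinorIndex t m n) k ⧸ relationsOfDegreeLE k t m n 3 :=
  (Ideal.Quotient.mkₐ k _).toLinearMap ∘ₗ
    Finsupp.linearCombination k fun u => wordMonomial k (u.1 ∘ w) (u.2 ∘ w')

theorem wordCombination_single (w w' : Perm (Fin t × κ)) (I : Fin t × κ → Fin m)
    (J : Fin t × κ → Fin n) : wordCombination k w w' (Finsupp.single (I, J) 1) =
      Ideal.Quotient.mk _ (wordMonomial k (I ∘ w) (J ∘ w')) := by
  rw [wordCombination, LinearMap.comp_apply, Finsupp.linearCombination_single, one_smul]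
  rfl

variable [DecidableEq κ]

theorem wordCombination_mul_mul {σ τ : Perm (Fin t × κ)} (hσ : σ ∈ youngSubgroup Prod.snd)
    (hτ : τ ∈ youngSubgroup Prod.snd) (w w' : Perm (Fin t × κ)) :
    wordCombination (m := m) (n := n) k (w * σ) (w' * τ) =
      (sign σ * sign τ) • wordCombination k w w' := by
  refine Finsupp.lhom_ext' fun ⟨I, J⟩ => LinearMap.ext_ring ?_
  simp only [LinearMap.comp_apply, Finsupp.lsingle_apply, LinearMap.smul_apply,
    wordCombination_single, Perm.coe_mul, ← Function.comp_assoc,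
    wordMonomial_comp_of_mem_youngSubgroup hσ hτ]
  simp only [Units.smul_def, map_zsmul]

theorem sum_wordCombination_mul_eq [IsDomain k] {B : Finset κ} (hB : B.card ≤ 3)
    {v : Perm (Fin t × κ)} (hv : v ∈ movingBlocks Prod.snd B) (w w' : Perm (Fin t × κ)) :
    ∑ σ : youngSubgroup (Prod.snd : Fin t × κ → κ),
        sign σ.1 • wordCombination (m := m) (n := n) k (w * σ.1 * v) w' =
      ∑ σ : youngSubgroup (Prod.snd : Fin t × κ → κ),
        sign σ.1 • wordCombination k w (w' * σ.1 * v⁻¹) := by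
  refine Finsupp.lhom_ext' fun ⟨I, J⟩ => LinearMap.ext_ring ?_
  have h := relationsOfDegreeLE_mono hB
    (sum_wordMonomial_comp_sub_mem_relationsOfDegreeLE (k := k) hv (I ∘ w) (J ∘ w'))
  rw [← Ideal.Quotient.mk_eq_mk_iff_sub_mem] at h
  simpa only [LinearMap.comp_apply, Finsupp.lsingle_apply, LinearMap.sum_apply,
    LinearMap.smul_apply, wordCombination_single, mul_assoc, Perm.coe_mul, Function.comp_assoc,
    map_sum, map_zsmul, Units.smul_def] using h

theorem sum_sum_wordCombination_eq_zero
    {f : (Fin t × κ → Fin m) × (Fin t × κ → Fin n) →₀ k}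
    (hf : minorPresentation k t m n
      (Finsupp.linearCombination k (fun u => wordMonomial k u.1 u.2) f) = 0)
    (h : Perm (Fin t × κ)) :
    ∑ w, ∑ σ : youngSubgroup (Prod.snd : Fin t × κ → κ),
      sign σ.1 • wordCombination k w (σ.1 * w * h) f = 0 := by
  obtain ⟨L, hL⟩ := exists_linearMap_biwordMonomial (k := k)
    (fun I J => ∑ w : Perm (Fin t × κ), wordCombination k w (w * h) (Finsupp.single (I, J) 1))
    fun I J ρ => by
      simp only [wordCombination_single]
      exact Equiv.sum_comp (Equiv.mulLeft ρ) fun w => Ideal.Quotient.mk _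
        (wordMonomial k (I ∘ w) (J ∘ ⇑(w * h)))
  have hcomp : L ∘ₗ (minorPresentation k t m n).toLinearMap ∘ₗ
      Finsupp.linearCombination k (fun u => wordMonomial k u.1 u.2) =
      ∑ w, ∑ σ : youngSubgroup (Prod.snd : Fin t × κ → κ),
        sign σ.1 • wordCombination k w (σ.1 * w * h) := by
    refine Finsupp.lhom_ext' fun ⟨I, J⟩ => LinearMap.ext_ring ?_
    rw [Finset.sum_comm]
    simp only [LinearMap.comp_apply, Finsupp.lsingle_apply, Finsupp.linearCombination_single,
      one_smul, AlgHom.toLinearMap_apply, minorPresentation_wordMonomial_comp_right, map_sum,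
      map_zsmul, Units.smul_def, hL, LinearMap.sum_apply, LinearMap.smul_apply,
      wordCombination_single, Finset.smul_sum, mul_assoc, Perm.coe_mul, Function.comp_assoc]
  simpa [hf] using (LinearMap.congr_fun hcomp f).symm

end WordCombination

section WordForm

open Equiv Equiv.Perm
open MonoidAlgebra (of)
open scoped MonoidAlgebra

variable {k κ : Type*} {t m n : ℕ} [Fintype κ] [DecidableEq κ] [CommRing k] [Algebra ℚ k]

/-- The bilinear form on the group algebra of the permutations of the boxes `Fin t × κ` that takes
`(w, w')` to the combination `f` of words with rows permuted by `w` and columns by `w'`, with the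
sign of `w * w'`, which makes it invariant and not merely alternating under block preserving
permutations. -/
noncomputable def wordForm (f : (Fin t × κ → Fin m) × (Fin t × κ → Fin n) →₀ k) :
    ℚ[Perm (Fin t × κ)] →ₗ[ℚ] ℚ[Perm (Fin t × κ)] →ₗ[ℚ]
      MvPolynomial (MinorIndex t m n) k ⧸ relationsOfDegreeLE k t m n 3 :=
  (MonoidAlgebra.basis _ ℚ).constr ℚ fun w => (MonoidAlgebra.basis _ ℚ).constr ℚ fun w' =>
    (sign w * sign w') • wordCombination k w w' f

variable {f : (Fin t × κ → Fin m) × (Fin t × κ → Fin n) →₀ k}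

theorem wordForm_of_of (w w' : Perm (Fin t × κ)) :
    wordForm f (of ℚ _ w) (of ℚ _ w') = (sign w * sign w') • wordCombination k w w' f := by
  have h (g : Perm (Fin t × κ)) : of ℚ _ g = MonoidAlgebra.basis _ ℚ g :=
    (MonoidAlgebra.basis_apply ℚ g).symm
  rw [h, h, wordForm, Module.Basis.constr_basis, Module.Basis.constr_basis]

theorem isRightInvariant_wordForm : IsRightInvariant (youngSubgroup Prod.snd) (wordForm f) := by
  refine .of_forall (fun σ hσ g g' => ?_) fun σ hσ g g' => ?_
  · have h := wordCombination_mul_mul (k := k) (m := m) (n := n) hσ (one_mem _) g g'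
    rw [mul_one, Perm.sign_one, mul_one] at h
    rw [wordForm_of_of, wordForm_of_of, h, LinearMap.smul_apply, smul_smul, Perm.sign_mul,
      mul_right_comm, mul_assoc (sign g), Int.units_mul_self, mul_one]
  · have h := wordCombination_mul_mul (k := k) (m := m) (n := n) (one_mem _) hσ g g'
    rw [mul_one, Perm.sign_one, one_mul] at h
    rw [wordForm_of_of, wordForm_of_of, h, LinearMap.smul_apply, smul_smul, Perm.sign_mul,
      ← mul_assoc, mul_assoc (sign g * sign g'), Int.units_mul_self, mul_one]

theorem of_mem_transferSubmodule_wordForm [IsDomain k] {B : Finset κ} (hB : B.card ≤ 3)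
    {v : Perm (Fin t × κ)} (hv : v ∈ movingBlocks Prod.snd B) :
    of ℚ _ v ∈ transferSubmodule (youngSubgroup Prod.snd) (wordForm f) := by
  refine of_mem_transferSubmodule fun g g' => ?_
  have h := congrArg ((sign g * sign g' * sign v) • ·)
    (LinearMap.congr_fun (sum_wordCombination_mul_eq (k := k) hB hv g g') f)
  simp only [LinearMap.sum_apply, LinearMap.smul_apply, Finset.smul_sum, smul_smul] at h
  simp only [of_mul_subgroupSum_mul_of, map_sum, LinearMap.sum_apply, wordForm_of_of,
    Perm.sign_mul, sign_inv]
  simpa only [mul_assoc, mul_comm, mul_left_comm] using h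

theorem transferSubmodule_wordForm [IsDomain k] :
    transferSubmodule (youngSubgroup Prod.snd) (wordForm f) = ⊤ := by
  refine isRightInvariant_wordForm.isHeckeClosed_transferSubmodule.eq_top (fun p q => ?_)
    fun B hB v hv => of_mem_transferSubmodule_wordForm hB hv
  refine Fintype.card_congr ((prodCongr (.refl _) (swap p.2 q.2)).subtypeEquiv fun r => ?_)
  rw [prodCongr_apply, Prod.map_snd, ← eq_symm_apply, symm_swap, swap_apply_right]

theorem sum_wordForm_eq_zero
    (hf : minorPresentation k t m n
      (Finsupp.linearCombination k (fun u => wordMonomial k u.1 u.2) f) = 0)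
    (g : Perm (Fin t × κ)) :
    ∑ w, wordForm f (of ℚ _ w)
      (subgroupSum ℚ (youngSubgroup Prod.snd) * of ℚ _ w * of ℚ _ g) = 0 := by
  have h := congrArg (sign g • ·) (sum_sum_wordCombination_eq_zero hf g)
  simp only [Finset.smul_sum, smul_smul, smul_zero] at h
  rw [← h]
  refine Finset.sum_congr rfl fun w _ => ?_
  simp only [subgroupSum, Finset.sum_mul, map_sum, ← map_mul (of ℚ _), wordForm_of_of]
  refine Finset.sum_congr rfl fun σ _ => ?_
  rw [Perm.sign_mul, Perm.sign_mul, mul_right_comm, mul_left_comm, Int.units_mul_self,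
    mul_one, mul_comm]

theorem linearCombination_wordMonomial_mem_relationsOfDegreeLE {κ : Type*} [Fintype κ] [IsDomain k]
    {f : (Fin t × κ → Fin m) × (Fin t × κ → Fin n) →₀ k}
    (hf : minorPresentation k t m n
      (Finsupp.linearCombination k (fun u => wordMonomial k u.1 u.2) f) = 0) :
    Finsupp.linearCombination k (fun u => wordMonomial k u.1 u.2) f ∈
      relationsOfDegreeLE k t m n 3 := by
  classical
  have h := isRightInvariant_wordForm.apply_one_one_eq_zero transferSubmodule_wordForm
    (sum_wordForm_eq_zero hf)
  rw [← map_one (of ℚ _), wordForm_of_of, Perm.sign_one, mul_one, one_smul] at h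
  exact Ideal.Quotient.eq_zero_iff_mem.1 h

end WordForm

section Homogeneous

theorem exists_monomial_eq_prod_X {k σ : Type*} [CommSemiring k] (s : σ →₀ ℕ) :
    ∃ i : Fin s.degree → σ, monomial s (1 : k) = ∏ j, X (i j) := by
  obtain ⟨l, hl⟩ := Quot.exists_rep s.toMultiset
  have hcard : l.length = s.degree := by
    rw [Finsupp.degree_apply]
    exact (congrArg Multiset.card hl).trans (Finsupp.card_toMultiset s)
  rw [← hcard]
  refine ⟨l.get, ?_⟩
  calc monomial s (1 : k) = (s.toMultiset.map X).prod := by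
        rw [monomial_eq, C_1, one_mul, Finsupp.toMultiset_map, Finsupp.prod_toMultiset,
          Finsupp.prod_mapDomain_index (fun _ => pow_zero _) (fun _ _ _ => pow_add _ _ _)]
    _ = (l.map X).prod := by rw [← hl]; rfl
    _ = ∏ j, X (l.get j) := (Fin.prod_univ_fun_getElem l X).symm

variable {k : Type*} {t m n : ℕ} [CommRing k]

theorem exists_wordMonomial_eq_monomial (s : MinorIndex t m n →₀ ℕ) :
    ∃ (I : Fin t × Fin s.degree → Fin m) (J : Fin t × Fin s.degree → Fin n),
      wordMonomial k I J = monomial s 1 := by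
  obtain ⟨i, hi⟩ := exists_monomial_eq_prod_X (k := k) s
  exact ⟨fun p => (i p.2).1.1.orderEmbOfFin (i p.2).2.1 p.1,
    fun p => (i p.2).1.2.orderEmbOfFin (i p.2).2.2 p.1,
    hi ▸ Finset.prod_congr rfl fun j _ => alternatingVariable_orderEmbOfFin (i j)⟩

theorem exists_linearCombination_wordMonomial_eq_of_isHomogeneous {d : ℕ}
    {f : MvPolynomial (MinorIndex t m n) k} (hf : f.IsHomogeneous d) :
    ∃ c : (Fin t × Fin d → Fin m) × (Fin t × Fin d → Fin n) →₀ k,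
      Finsupp.linearCombination k (fun u => wordMonomial k u.1 u.2) c = f := by
  rw [← LinearMap.mem_range, Finsupp.range_linearCombination, f.as_sum]
  refine sum_mem fun s hs => ?_
  have hd : s.degree = d := by
    rw [Finsupp.degree_eq_weight_one]
    exact hf (mem_support_iff.1 hs)
  subst hd
  obtain ⟨I, J, h⟩ := exists_wordMonomial_eq_monomial (k := k) s
  rw [← mul_one (coeff s f), ← smul_eq_mul, ← smul_monomial, ← h]
  exact Submodule.smul_mem _ _ (Submodule.subset_span ⟨(I, J), rfl⟩)

theorem homogeneousComponent_mul_aeval {σ τ : Type*} {g : σ → MvPolynomial τ k} (ht : 0 < t)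
    (hg : ∀ i, (g i).IsHomogeneous t) (f : MvPolynomial σ k) (d : ℕ) :
    homogeneousComponent (t * d) (aeval g f) = aeval g (homogeneousComponent d f) := by
  have h (e : ℕ) : (aeval g (homogeneousComponent e f)).IsHomogeneous (t * e) :=
    (homogeneousComponent_isHomogeneous e f).aeval _ hg
  conv_lhs => rw [← sum_homogeneousComponent f, map_sum, map_sum]
  rw [Finset.sum_eq_single d]
  · rw [homogeneousComponent_of_mem (h d), if_pos rfl]
  · intro e _ hne
    rw [homogeneousComponent_of_mem (h e),
      if_neg fun h => hne (Nat.eq_of_mul_eq_mul_left ht h).symm]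
  · intro hd
    rw [homogeneousComponent_eq_zero d f (by simpa using hd), map_zero, map_zero]

theorem homogeneousComponent_mem_minorRelations (ht : 0 < t) {f : MvPolynomial (MinorIndex t m n) k}
    (hf : f ∈ minorRelations k t m n) (d : ℕ) :
    homogeneousComponent d f ∈ minorRelations k t m n := by
  have hg (p : MinorIndex t m n) := isHomogeneous_genericMinor (k := k) _ _ p.2.1 p.2.2
  have h := homogeneousComponent_mul_aeval ht hg f d
  have hf' : minorPresentation k t m n f = 0 := hf
  rw [minorPresentation] at hf'
  rw [hf', map_zero] at h
  exact h.symm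

theorem minorRelations_five_five_general (k : Type*) [CommRing k] [IsDomain k] [Algebra ℚ k]
    (m n : ℕ) {t : ℕ} (ht : 0 < t) : GeneratedInDegreesLE (minorRelations k t m n) 3 := by
  refine le_antisymm (fun f hf => ?_) (Ideal.span_le.2 fun x hx => hx.1)
  rw [← sum_homogeneousComponent f]
  refine Ideal.sum_mem _ fun d _ => ?_
  obtain ⟨c, hc⟩ := exists_linearCombination_wordMonomial_eq_of_isHomogeneous
    (homogeneousComponent_isHomogeneous d f)
  have h := homogeneousComponent_mem_minorRelations ht hf d
  rw [← hc] at h ⊢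
  exact linearCombination_wordMonomial_mem_relationsOfDegreeLE h

end Homogeneous

/-- The ideals of relations among the 2-minors, respectively the 3-minors, of a generic
`5 × 5` matrix are generated by their elements of degree at most 3. -/
theorem minorRelations_five_five (k : Type*) [Field k] [CharZero k] :
    GeneratedInDegreesLE (minorRelations k 2 5 5) 3 ∧
    GeneratedInDegreesLE (minorRelations k 3 5 5) 3 :=
  ⟨minorRelations_five_five_general k 5 5 two_pos,
    minorRelations_five_five_general k 5 5 three_pos⟩
end

section
/- Let k be a field of characteristic 0 and let t, m, n satisfy 2 ≤ t, t+1 ≤ m ≤ n, and t+2 ≤ n. Then J_t(m,n) has a minimal generator of degree 3: the degree-3 homogeneous component of J_t(m,n) is not contained in the ideal of S_t(m,n) generated by the elements of J_t(m,n) of degree 2. -/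
/-!
Fix a set `S` of `t + 1` rows and a set `D` of `t - 1` columns. For three rows `p i ∈ S` and three
columns `q j ∉ D`, the `3 × 3` determinant of the minors `[S \ p i | D ∪ q j]` is a relation: the
columns `D ∪ {q 1, q 2, q 3}` of the rows `S` form a `(t + 1) × (t + 2)` matrix, which kills a
nonzero vector, and the part of that vector indexed by the `q j` is killed by the matrix of minors.

This cubic contains the diagonal monomial `y₁₁ y₂₂ y₃₃` with coefficient `1`. No quadratic relation
involves a divisor of it: given `i ≠ j`, some `τ` maps `S \ p i` onto `D ∪ q i` and `S \ p j` onto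
`D ∪ q j`, and specializing the generic matrix to the one supported on the graph of `τ` turns the
minors into zeros and signed squarefree monomials of degree `t`. Those whose rows lie in `S` are
algebraically independent, so no relation contains a monomial in `y_ii` and `y_jj`.
-/

open MvPolynomial

section Determinants

theorem exists_perm_comp_eq {ι β : Type*} {f g : ι → β} (hf : f.Injective) (hg : g.Injective)
    (h : Set.range f = Set.range g) : ∃ e : Equiv.Perm ι, f ∘ e = g := by
  refine ⟨((Equiv.ofInjective g hg).trans (Equiv.setCongr h.symm)).trans
    (Equiv.ofInjective f hf).symm, funext fun x => ?_⟩
  simp [Equiv.apply_ofInjective_symm]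

variable {α β γ R : Type*} [CommRing R] {u : ℕ}

theorem exists_det_submatrix_eq_of_range_eq {ι : Type*} [Fintype ι] [DecidableEq ι] {f g : ι → β}
    (hf : f.Injective) (hg : g.Injective) (h : Set.range f = Set.range g) (N : Matrix α β R) :
    ∃ ε : ℤˣ, ∀ r : ι → α, (N.submatrix r f).det = (ε : ℤ) * (N.submatrix r g).det := by
  obtain ⟨e, rfl⟩ := exists_perm_comp_eq hf hg h
  refine ⟨Equiv.Perm.sign e, fun r => ?_⟩
  have hperm : (N.submatrix r (f ∘ e)).det = (Equiv.Perm.sign e : ℤ) * (N.submatrix r f).det :=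
    Matrix.det_permute' e (N.submatrix r f)
  rw [hperm, ← mul_assoc, ← Int.cast_mul, ← Units.val_mul, Int.units_mul_self]
  simp

theorem exists_det_submatrix_orderEmbOfFin_insert [LinearOrder β] {D : Finset β}
    (hD : D.card = u) {q : β} (hq : q ∉ D) (h : (insert q D).card = u + 1) (N : Matrix α β R) :
    ∃ ε : ℤˣ, ∀ r : Fin (u + 1) → α, (N.submatrix r ((insert q D).orderEmbOfFin h)).det =
      (ε : ℤ) * (N.submatrix r (Fin.snoc (α := fun _ => β) (D.orderEmbOfFin hD) q)).det := by
  refine exists_det_submatrix_eq_of_range_eq ((insert q D).orderEmbOfFin h).injective ?_ ?_ N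
  · rw [Fin.snoc_injective_iff]
    exact ⟨(D.orderEmbOfFin hD).injective, by simpa using hq⟩
  · rw [Finset.range_orderEmbOfFin, Fin.range_snoc, Finset.range_orderEmbOfFin, Finset.coe_insert]

/-- The minors of `P = (A | V)` that use all `u` columns of `A` and one column of `V`: entry
`(i, j)` has rows `r i` and takes the column `j` of `V`. -/
def borderedMinors (P : Matrix α (Fin u ⊕ γ) R) (r : γ → Fin (u + 1) → α) : Matrix γ γ R :=
  Matrix.of fun i j =>
    (P.submatrix (r i) (Fin.snoc (α := fun _ => Fin u ⊕ γ) Sum.inl (Sum.inr j))).det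

theorem borderedMinors_map {R' : Type*} [CommRing R'] (f : R →+* R')
    (P : Matrix α (Fin u ⊕ γ) R) (r : γ → Fin (u + 1) → α) :
    borderedMinors (P.map f) r = (borderedMinors P r).map f := by
  ext i j
  simp only [borderedMinors, Matrix.of_apply, Matrix.map_apply, RingHom.map_det,
    RingHom.mapMatrix_apply, Matrix.submatrix_map]

variable [Fintype γ]

theorem borderedMinors_mulVec_eq_zero {P : Matrix α (Fin u ⊕ γ) R} {x : Fin u ⊕ γ → R}
    (hx : P.mulVec x = 0) (r : γ → Fin (u + 1) → α) :
    (borderedMinors P r).mulVec (x ∘ Sum.inr) = 0 := by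
  ext i
  let φ (c : Fin u ⊕ γ) : R :=
    (P.submatrix (r i) (Fin.snoc (α := fun _ => Fin u ⊕ γ) Sum.inl c)).det
  have φ_inl (b : Fin u) : φ (Sum.inl b) = 0 :=
    Matrix.det_zero_of_column_eq (Fin.castSucc_lt_last b).ne fun a => by simp
  let C (a : Fin (u + 1)) : R :=
    (-1) ^ (a + u : ℕ) * (P.submatrix (r i ∘ a.succAbove) Sum.inl).det
  have φ_expand (c : Fin u ⊕ γ) : φ c = ∑ a, C a * P (r i a) c := by
    simp only [φ, Matrix.det_succ_column _ (Fin.last u), Matrix.submatrix_apply, Fin.snoc_last,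
      Matrix.submatrix_submatrix, Fin.succAbove_last, Fin.snoc_comp_castSucc, Fin.val_last, C,
      mul_right_comm]
  calc ∑ j, φ (Sum.inr j) * x (Sum.inr j)
      = ∑ c, φ c * x c := by simp [Fintype.sum_sum_type, φ_inl]
    _ = ∑ a, C a * P.mulVec x (r i a) := by
      simp only [φ_expand, Matrix.mulVec, dotProduct, Finset.sum_mul, Finset.mul_sum, mul_assoc]
      exact Finset.sum_comm
    _ = 0 := by simp [hx]

variable [Fintype α] [DecidableEq γ] [Nonempty γ]

theorem det_borderedMinors_eq_zero_of_isDomain [IsDomain R]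
    (h : Fintype.card α < u + Fintype.card γ)
    (P : Matrix α (Fin u ⊕ γ) R) (r : γ → Fin (u + 1) → α) : (borderedMinors P r).det = 0 := by
  obtain ⟨x, hx0, hx⟩ : ∃ x ≠ 0, P.mulVec x = 0 := by
    by_contra! hinj
    have := card_le_of_injective R P.mulVecLin
      ((injective_iff_map_eq_zero _).mpr fun x hx => by_contra fun h0 => hinj x h0 hx)
    simp only [Fintype.card_sum, Fintype.card_fin] at this
    omega
  by_cases hV : x ∘ Sum.inr = 0
  · have hA : x ∘ Sum.inl ≠ 0 := fun hA =>
      hx0 (funext (Sum.rec (congrFun hA) (congrFun hV)))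
    have hzero : borderedMinors P r = 0 := by
      ext i j
      refine Matrix.exists_mulVec_eq_zero_iff.mp
        ⟨Fin.snoc (α := fun _ => R) (x ∘ Sum.inl) 0, fun h0 => hA ?_, ?_⟩
      · simpa using congrArg (· ∘ Fin.castSucc) h0
      · ext a
        have hrow : ∑ c, P (r i a) c * x c = 0 := congrFun hx (r i a)
        have hV' (j : γ) : x (Sum.inr j) = 0 := congrFun hV j
        simpa [Matrix.mulVec, dotProduct, Fin.sum_univ_castSucc, Fintype.sum_sum_type, hV']
          using hrow
    rw [hzero, Matrix.det_zero]
  · exact Matrix.exists_mulVec_eq_zero_iff.mp ⟨_, hV, borderedMinors_mulVec_eq_zero hx r⟩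

theorem det_borderedMinors_eq_zero (h : Fintype.card α < u + Fintype.card γ)
    (P : Matrix α (Fin u ⊕ γ) R) (r : γ → Fin (u + 1) → α) : (borderedMinors P r).det = 0 := by
  let f : MvPolynomial (α × (Fin u ⊕ γ)) ℤ →+* R :=
    eval₂Hom (Int.castRingHom R) fun p => P p.1 p.2
  have hP : (Matrix.mvPolynomialX α (Fin u ⊕ γ) ℤ).map f = P :=
    Matrix.mvPolynomialX_map_eval₂ (Int.castRingHom R) P
  rw [← hP, borderedMinors_map, ← RingHom.mapMatrix_apply, ← RingHom.map_det,
    det_borderedMinors_eq_zero_of_isDomain h, map_zero]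

end Determinants

section Transversal

/-- The matrix with the single nonzero entry `v i` in row `i`, placed in column `τ i`. Substituting
it for the generic matrix turns every minor into a signed monomial in the `v i`, or zero. -/
def transversalMatrix {α β A : Type*} [DecidableEq β] [Zero A] (τ : α → β) (v : α → A) :
    Matrix α β A :=
  Matrix.of fun i j => if j = τ i then v i else 0

variable {α β A : Type*} [LinearOrder α] [LinearOrder β] [CommRing A] {t : ℕ}
  (τ : α → β) (v : α → A) {I : Finset α} {J : Finset β} (hI : I.card = t) (hJ : J.card = t)

theorem det_submatrix_transversalMatrix_of_eq (h : J = I.image τ) : ∃ ε : ℤˣ,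
    ((transversalMatrix τ v).submatrix (I.orderEmbOfFin hI) (J.orderEmbOfFin hJ)).det =
      (ε : ℤ) * ∏ i ∈ I, v i := by
  have hτ : Set.InjOn τ I := Finset.injOn_of_card_image_eq (by rw [← h, hJ, hI])
  have hτI : (τ ∘ I.orderEmbOfFin hI).Injective := fun x y hxy => (I.orderEmbOfFin hI).injective
    (hτ (Finset.orderEmbOfFin_mem _ _ _) (Finset.orderEmbOfFin_mem _ _ _) hxy)
  have hrange : Set.range (J.orderEmbOfFin hJ) = Set.range (τ ∘ I.orderEmbOfFin hI) := by
    rw [Set.range_comp, Finset.range_orderEmbOfFin, Finset.range_orderEmbOfFin, h,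
      Finset.coe_image]
  have hdiag : (transversalMatrix τ v).submatrix (I.orderEmbOfFin hI) (τ ∘ I.orderEmbOfFin hI) =
      Matrix.diagonal fun x => v (I.orderEmbOfFin hI x) := by
    ext x y
    exact if_congr (hτI.eq_iff.trans eq_comm) rfl rfl
  have hprod : ∏ i ∈ I, v i = ∏ x, v (I.orderEmbOfFin hI x) := by
    conv_lhs => rw [← Finset.map_orderEmbOfFin_univ I hI, Finset.prod_map]
    rfl
  obtain ⟨ε, hε⟩ := exists_det_submatrix_eq_of_range_eq (J.orderEmbOfFin hJ).injective hτI hrange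
    (transversalMatrix τ v)
  exact ⟨ε, by rw [hε, hdiag, Matrix.det_diagonal, hprod]⟩

theorem det_submatrix_transversalMatrix_of_ne (h : J ≠ I.image τ) :
    ((transversalMatrix τ v).submatrix (I.orderEmbOfFin hI) (J.orderEmbOfFin hJ)).det = 0 := by
  obtain ⟨j, hj, hjI⟩ := Finset.not_subset.mp fun hs => h
    (Finset.eq_of_subset_of_card_le hs (Finset.card_image_le.trans (by omega)))
  obtain ⟨y, rfl⟩ : j ∈ Set.range (J.orderEmbOfFin hJ) := by simpa using hj
  refine Matrix.det_eq_zero_of_column_eq_zero y fun x => if_neg fun hxy => hjI ?_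
  exact hxy ▸ Finset.mem_image_of_mem _ (Finset.orderEmbOfFin_mem _ _ _)

end Transversal

section RowMultidegree

variable {α σ : Type*} {rows : σ → Finset α} {t : ℕ} {G : Set σ} {S : Finset α} {d d' : σ →₀ ℕ}

/-- The multidegree of the monomial `y ^ d` when the indeterminate `y a` has the multidegree of the
squarefree monomial supported on `rows a`. -/
noncomputable def rowMultidegree (rows : σ → Finset α) : (σ →₀ ℕ) →+ (α →₀ ℕ) :=
  Finsupp.weight fun a => ∑ i ∈ rows a, Finsupp.single i 1

theorem rowMultidegree_apply [DecidableEq α] (d : σ →₀ ℕ) (x : α) :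
    rowMultidegree rows d x = ∑ a ∈ d.support with x ∈ rows a, d a := by
  simp [rowMultidegree, Finsupp.weight_apply, Finsupp.sum, Finsupp.finsetSum_apply,
    Finsupp.single_apply, Finset.sum_filter]

theorem degree_rowMultidegree (hrows : ∀ a, (rows a).card = t) (d : σ →₀ ℕ) :
    (rowMultidegree rows d).degree = d.degree * t := by
  simp [rowMultidegree, Finsupp.weight_apply, Finsupp.sum, Finsupp.degree_apply d, hrows,
    Finset.sum_mul]

theorem rowMultidegree_apply_add_apply {x : α} {b : σ} (hxb : x ∉ rows b)
    (hx : ∀ a ∈ d.support, x ∉ rows a → a = b) :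
    rowMultidegree rows d x + d b = d.degree := by
  classical
  rw [rowMultidegree_apply, Finsupp.degree_apply,
    ← Finset.sum_filter_add_sum_filter_not d.support (x ∈ rows ·)]
  congr 1
  refine (Finset.sum_eq_single b (fun a ha hab => absurd (hx a ?_ ?_) hab) fun hb => ?_).symm
  · exact (Finset.mem_filter.mp ha).1
  · exact (Finset.mem_filter.mp ha).2
  · simpa [hxb] using hb

theorem rows_subset_of_rowMultidegree_eq (h : rowMultidegree rows d' = rowMultidegree rows d)
    (hdS : ∀ a ∈ d.support, rows a ⊆ S) : ∀ a ∈ d'.support, rows a ⊆ S := by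
  classical
  intro a ha x hxa
  by_contra hxS
  have hd : rowMultidegree rows d x = 0 := by
    rw [rowMultidegree_apply, Finset.filter_false_of_mem fun b hb hxb => hxS (hdS b hb hxb),
      Finset.sum_empty]
  rw [← h, rowMultidegree_apply, Finset.sum_eq_zero_iff] at hd
  exact Finsupp.mem_support_iff.mp ha (hd a (Finset.mem_filter.mpr ⟨ha, hxa⟩))

/-- The squarefree monomials of degree `t` in `t + 1` variables are algebraically independent. -/
theorem eq_of_rowMultidegree_eq (ht : t ≠ 0) (hrows : ∀ a, (rows a).card = t)
    (hinj : G.InjOn rows) (hS : S.card = t + 1) (hdG : ↑d.support ⊆ G) (hdG' : ↑d'.support ⊆ G)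
    (hdS : ∀ a ∈ d.support, rows a ⊆ S) (h : rowMultidegree rows d' = rowMultidegree rows d) :
    d' = d := by
  classical
  have hdS' := rows_subset_of_rowMultidegree_eq h hdS
  have hdeg : d'.degree = d.degree := by
    have := congrArg Finsupp.degree h
    rw [degree_rowMultidegree hrows, degree_rowMultidegree hrows] at this
    exact Nat.eq_of_mul_eq_mul_right (Nat.pos_of_ne_zero ht) this
  have heq_erase {a : σ} {x : α} (haS : rows a ⊆ S) (hxS : x ∈ S) (hxa : x ∉ rows a) :
      rows a = S.erase x :=
    Finset.eq_of_subset_of_card_le (Finset.subset_erase.mpr ⟨haS, hxa⟩)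
      (by rw [Finset.card_erase_of_mem hxS, hrows]; omega)
  have happly {b : σ} (hbG : b ∈ G) (hbS : rows b ⊆ S) : d' b = d b := by
    obtain ⟨x, hxS, hxb⟩ := Finset.exists_mem_notMem_of_card_lt_card
      (show (rows b).card < S.card by rw [hrows]; omega)
    have huniq {f : σ →₀ ℕ} (hfG : ↑f.support ⊆ G) (hfS : ∀ a ∈ f.support, rows a ⊆ S) :
        ∀ a ∈ f.support, x ∉ rows a → a = b := fun a ha hxa =>
      hinj (hfG ha) hbG ((heq_erase (hfS a ha) hxS hxa).trans (heq_erase hbS hxS hxb).symm)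
    have hd := rowMultidegree_apply_add_apply hxb (huniq hdG hdS)
    have hd' := rowMultidegree_apply_add_apply hxb (huniq hdG' hdS')
    rw [h] at hd'
    omega
  ext b
  by_cases hb : b ∈ d.support
  · exact happly (hdG hb) (hdS b hb)
  by_cases hb' : b ∈ d'.support
  · exact happly (hdG' hb') (hdS' b hb')
  · rw [Finsupp.notMem_support_iff.mp hb, Finsupp.notMem_support_iff.mp hb']

end RowMultidegree

section Coefficients

variable {σ ι k : Type*} [CommRing k]

theorem aeval_monomial_monomial (w : σ → ι →₀ ℕ) (c : σ → k) (d : σ →₀ ℕ) (r : k) :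
    aeval (fun a => (monomial (w a) (c a) : MvPolynomial ι k)) (monomial d r) =
      monomial (Finsupp.weight w d) (r * d.prod fun a e => c a ^ e) := by
  simp only [aeval_monomial, monomial_pow, Finsupp.prod, Finsupp.weight_apply, Finsupp.sum,
    ← monomial_sum_prod, algebraMap_eq, C_mul_monomial]

theorem coeff_eq_zero_of_aeval_monomial_eq_zero {w : σ → ι →₀ ℕ} {c : σ → k} {Q : MvPolynomial σ k}
    (hQ : aeval (fun a => (monomial (w a) (c a) : MvPolynomial ι k)) Q = 0) {d : σ →₀ ℕ}
    (hc : ∀ a ∈ d.support, IsUnit (c a))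
    (huniq : ∀ d' : σ →₀ ℕ, (∀ a ∈ d'.support, c a ≠ 0) →
      Finsupp.weight w d' = Finsupp.weight w d → d' = d) : coeff d Q = 0 := by
  classical
  have hcoeff := congrArg (coeff (Finsupp.weight w d)) hQ
  rw [Q.as_sum, map_sum, coeff_sum, coeff_zero, Finset.sum_eq_single d] at hcoeff
  · rw [aeval_monomial_monomial, coeff_monomial, if_pos rfl] at hcoeff
    have hunit : IsUnit (d.prod fun a e => c a ^ e) :=
      IsUnit.prod_iff.mpr fun a ha => (hc a ha).pow _
    exact hunit.mul_left_eq_zero.mp hcoeff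
  · intro d' _ hne
    rw [aeval_monomial_monomial, coeff_monomial]
    refine ite_eq_right_iff.mpr fun hw => ?_
    obtain ⟨a, ha, hca⟩ : ∃ a ∈ d'.support, c a = 0 := by
      by_contra! hcd
      exact hne (huniq d' hcd hw)
    rw [Finsupp.prod, Finset.prod_eq_zero ha (by
      rw [hca, zero_pow (Finsupp.mem_support_iff.mp ha)]), mul_zero]
  · intro hd
    rw [notMem_support_iff.mp hd, map_zero, map_zero, coeff_zero]

theorem coeff_eq_zero_of_mem_span {P : Set (MvPolynomial σ k)} {M : σ →₀ ℕ}
    (hP : ∀ q ∈ P, ∀ d ≤ M, coeff d q = 0) {f : MvPolynomial σ k} (hf : f ∈ Ideal.span P) :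
    coeff M f = 0 := by
  classical
  suffices ∀ d ≤ M, coeff d f = 0 from this M le_rfl
  refine Submodule.span_induction hP (fun _ _ => coeff_zero _) (fun f g _ _ hf hg d hd => ?_)
    (fun g f _ hf d hd => ?_) hf
  · rw [coeff_add, hf d hd, hg d hd, add_zero]
  · rw [smul_eq_mul, coeff_mul]
    refine Finset.sum_eq_zero fun e he => ?_
    rw [hf e.2 ((Finset.HasAntidiagonal.mem_antidiagonal.mp he ▸ le_add_self).trans hd), mul_zero]

variable {γ : Type*} [Fintype γ]

theorem support_sum_single_one [DecidableEq σ] (b : γ → σ) :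
    (∑ i, Finsupp.single (b i) 1 : σ →₀ ℕ).support = Finset.univ.image b := by
  ext x
  simp [Finsupp.finsetSum_apply, Finsupp.single_apply]

theorem card_support_le_degree (d : σ →₀ ℕ) : d.support.card ≤ d.degree := by
  rw [Finsupp.degree_apply, Finset.card_eq_sum_ones]
  exact Finset.sum_le_sum fun a ha => Nat.one_le_iff_ne_zero.mpr (Finsupp.mem_support_iff.mp ha)

theorem exists_notMem_support_of_degree_lt_card {b : γ → σ} (hb : b.Injective) {d : σ →₀ ℕ}
    (hd : d.degree < Fintype.card γ) : ∃ i, b i ∉ d.support := by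
  classical
  have hcard : d.support.card < (Finset.univ.image b).card := by
    rw [Finset.card_image_of_injective _ hb, Finset.card_univ]
    exact (card_support_le_degree d).trans_lt hd
  simpa using Finset.exists_mem_notMem_of_card_lt_card hcard

variable [DecidableEq γ] (a : γ → γ → σ)

theorem det_X_eq_sum_monomial :
    (Matrix.of fun i j => (X (a i j) : MvPolynomial σ k)).det =
      ∑ τ : Equiv.Perm γ, monomial (∑ i, Finsupp.single (a (τ i) i) 1)
        ((Equiv.Perm.sign τ : ℤ) : k) := by
  rw [Matrix.det_apply']
  refine Finset.sum_congr rfl fun τ _ => ?_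
  rw [monomial_sum_index, map_intCast]
  rfl

theorem isHomogeneous_det_X :
    (Matrix.of fun i j => (X (a i j) : MvPolynomial σ k)).det.IsHomogeneous (Fintype.card γ) := by
  rw [det_X_eq_sum_monomial]
  exact IsHomogeneous.sum _ _ _ fun τ _ => isHomogeneous_monomial _ (by simp)

theorem coeff_diagonal_det_X (ha : a.uncurry.Injective) :
    coeff (∑ i, Finsupp.single (a i i) 1) (Matrix.of fun i j => (X (a i j) : MvPolynomial σ k)).det
      = 1 := by
  classical
  have hdiag (τ : Equiv.Perm γ)
      (h : ∑ i, Finsupp.single (a (τ i) i) 1 = (∑ i, Finsupp.single (a i i) 1 : σ →₀ ℕ)) :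
      τ = 1 := by
    have himage := congrArg Finsupp.support h
    rw [support_sum_single_one, support_sum_single_one] at himage
    ext i
    obtain ⟨j, -, hj⟩ := Finset.mem_image.mp
      (himage ▸ Finset.mem_image_of_mem (fun i => a (τ i) i) (Finset.mem_univ i))
    have hji := Prod.mk.inj (ha (a₁ := (j, j)) (a₂ := (τ i, i)) hj)
    exact hji.1.symm.trans hji.2
  rw [det_X_eq_sum_monomial, coeff_sum, Finset.sum_eq_single 1]
  · simp
  · intro τ _ hτ
    rw [coeff_monomial, if_neg (mt (hdiag τ) hτ)]
  · simp

end Coefficients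

section Relations

variable {k : Type*} [CommRing k] {t u m n : ℕ}

theorem genericMinor_eq_det_submatrix {I : Finset (Fin m)} {J : Finset (Fin n)}
    (hI : I.card = t) (hJ : J.card = t) :
    genericMinor k m n t I J hI hJ = ((Matrix.mvPolynomialX (Fin m) (Fin n) k).submatrix
      (I.orderEmbOfFin hI) (J.orderEmbOfFin hJ)).det :=
  rfl

theorem aeval_genericMinor {A : Type*} [CommRing A] [Algebra k A] (N : Matrix (Fin m) (Fin n) A)
    {I : Finset (Fin m)} {J : Finset (Fin n)} (hI : I.card = t) (hJ : J.card = t) :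
    aeval (fun p => N p.1 p.2) (genericMinor k m n t I J hI hJ) =
      (N.submatrix (I.orderEmbOfFin hI) (J.orderEmbOfFin hJ)).det := by
  rw [genericMinor_eq_det_submatrix, AlgHom.map_det]
  congr 1
  ext x y
  simp

theorem exists_aeval_transversalMatrix_genericMinor (τ : Fin m → Fin n) (a : MinorIndex t m n) :
    ∃ c : k, aeval (fun p => transversalMatrix τ (X : Fin m → MvPolynomial (Fin m) k) p.1 p.2)
        (genericMinor k m n t a.1.1 a.1.2 a.2.1 a.2.2) =
          monomial (∑ i ∈ a.1.1, Finsupp.single i 1) c ∧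
      (a.1.2 = a.1.1.image τ → IsUnit c) ∧ (a.1.2 ≠ a.1.1.image τ → c = 0) := by
  rw [aeval_genericMinor]
  by_cases h : a.1.2 = a.1.1.image τ
  · obtain ⟨ε, hε⟩ := det_submatrix_transversalMatrix_of_eq τ
      (X : Fin m → MvPolynomial (Fin m) k) a.2.1 a.2.2 h
    refine ⟨(ε : ℤ), ?_, fun _ => ε.isUnit.map (Int.castRingHom k), absurd h⟩
    rw [hε, monomial_sum_index, map_intCast]
    rfl
  · exact ⟨0, by rw [det_submatrix_transversalMatrix_of_ne τ _ _ _ h, map_zero],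
      fun h' => absurd h' h, fun _ => rfl⟩

theorem coeff_eq_zero_of_mem_minorRelations (ht : t ≠ 0) {S : Finset (Fin m)}
    (hS : S.card = t + 1) (τ : Fin m → Fin n) {Q : MvPolynomial (MinorIndex t m n) k}
    (hQ : Q ∈ minorRelations k t m n) {d : MinorIndex t m n →₀ ℕ}
    (hd : ∀ a ∈ d.support, a.1.1 ⊆ S ∧ a.1.2 = a.1.1.image τ) : coeff d Q = 0 := by
  choose c hφ hunit hzero using
    exists_aeval_transversalMatrix_genericMinor (k := k) (t := t) τ
  have hφQ : aeval (fun a : MinorIndex t m n => (monomial (∑ i ∈ a.1.1, Finsupp.single i 1) (c a) :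
      MvPolynomial (Fin m) k)) Q = 0 := by
    have hπQ : minorPresentation k t m n Q = 0 := hQ
    simp_rw [← hφ]
    rw [← comp_aeval_apply, ← minorPresentation, hπQ, map_zero]
  let G : Set (MinorIndex t m n) := {a | a.1.2 = a.1.1.image τ}
  have hinj : G.InjOn fun a => a.1.1 := fun a ha b hb hab =>
    Subtype.ext (Prod.ext hab (ha.trans ((congrArg (Finset.image τ) hab).trans hb.symm)))
  refine coeff_eq_zero_of_aeval_monomial_eq_zero hφQ (fun a ha => hunit a (hd a ha).2)
    fun d' hd' hw => ?_
  exact eq_of_rowMultidegree_eq ht (fun a => a.2.1) hinj hS (fun a ha => (hd a ha).2)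
    (fun a ha => not_imp_comm.mp (hzero a) (hd' a ha)) (fun a ha => (hd a ha).1) hw

theorem exists_image_eq_of_card_eq {α β : Type*} [DecidableEq β] [Nonempty β] {K : Finset α}
    {L : Finset β} (h : K.card = L.card) : ∃ τ : α → β, K.image τ = L := by
  let e := Finset.equivOfCardEq h
  let τ := Function.extend Subtype.val (fun x => (e x : β)) fun _ => Classical.arbitrary β
  have hτ (x : K) : τ x = e x := Subtype.val_injective.extend_apply _ _ x
  refine ⟨τ, Finset.eq_of_subset_of_card_le (fun y hy => ?_) ?_⟩
  · obtain ⟨x, hx, rfl⟩ := Finset.mem_image.mp hy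
    exact hτ ⟨x, hx⟩ ▸ (e ⟨x, hx⟩).2
  · refine Finset.card_le_card fun y hy => Finset.mem_image.mpr ⟨e.symm ⟨y, hy⟩, Subtype.prop _, ?_⟩
    rw [hτ, e.apply_symm_apply]

theorem exists_image_erase_eq_insert {α β : Type*} [DecidableEq α] [DecidableEq β]
    {S : Finset α} {D : Finset β} (h : S.card = D.card + 2) {p q : α} (hp : p ∈ S) (hq : q ∈ S)
    (hpq : p ≠ q) (r s : β) :
    ∃ τ : α → β, (S.erase p).image τ = insert r D ∧ (S.erase q).image τ = insert s D := by
  have : Nonempty β := ⟨r⟩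
  have hq' : q ∈ S.erase p := Finset.mem_erase.mpr ⟨hpq.symm, hq⟩
  have hp' : p ∈ S.erase q := Finset.mem_erase.mpr ⟨hpq, hp⟩
  have hcard : ((S.erase p).erase q).card = D.card := by
    rw [Finset.card_erase_of_mem hq', Finset.card_erase_of_mem hp]
    omega
  obtain ⟨τ, hτ⟩ := exists_image_eq_of_card_eq hcard
  let τ' := Function.update (Function.update τ p s) q r
  have hτ' : ((S.erase p).erase q).image τ' = D := by
    rw [← hτ]
    refine Finset.image_congr fun x hx => ?_
    obtain ⟨⟨-, hxp⟩, hxq⟩ : (x ∈ S ∧ x ≠ p) ∧ x ≠ q := by simpa using hx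
    simp [τ', hxp, hxq]
  refine ⟨τ', ?_, ?_⟩
  · rw [← Finset.insert_erase hq', Finset.image_insert, hτ']
    simp [τ']
  · rw [← Finset.insert_erase hp', Finset.image_insert, Finset.erase_right_comm, hτ']
    simp [τ', hpq]

variable {S : Finset (Fin m)} {D : Finset (Fin n)} (hS : S.card = u + 2) (hD : D.card = u)

/-- The minor whose rows are those of `S` except `p`, and whose columns are those of `D`
and `q`. -/
def MinorIndex.bordered (p : S) (q : {q // q ∉ D}) : MinorIndex (u + 1) m n :=
  ⟨(S.erase p, insert q.1 D), by simp [hS], by rw [Finset.card_insert_of_notMem q.2, hD]⟩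

theorem MinorIndex.bordered_injective :
    (MinorIndex.bordered hS hD).uncurry.Injective := by
  rintro ⟨p, q⟩ ⟨p', q'⟩ h
  have hpq := Prod.mk.inj (congrArg Subtype.val h)
  have hp : p = p' := Subtype.ext (Finset.erase_injOn S p.2 p'.2 hpq.1)
  have hq : q = q' := Subtype.ext (Finset.insert_inj_on D q.2 q'.2 hpq.2)
  rw [hp, hq]

variable {γ : Type*} (ρ : γ → S) (κ : γ → {q // q ∉ D})

variable (k) in
/-- The determinant of the matrix of indeterminates whose rows are labelled by the row of `S`
omitted and whose columns are labelled by the column added to `D`. -/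
noncomputable def borderedRelation [Fintype γ] [DecidableEq γ] :
    MvPolynomial (MinorIndex (u + 1) m n) k :=
  (Matrix.of fun i j => X (MinorIndex.bordered hS hD (ρ i) (κ j))).det

theorem borderedRelation_mem_minorRelations [Fintype γ] [DecidableEq γ]
    (hγ : 2 < Fintype.card γ) :
    borderedRelation k hS hD ρ κ ∈ minorRelations k (u + 1) m n := by
  have : Nonempty γ := Fintype.card_pos_iff.mp (by omega)
  let N := Matrix.mvPolynomialX (Fin m) (Fin n) k
  let P : Matrix S (Fin u ⊕ γ) (MvPolynomial (Fin m × Fin n) k) :=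
    N.submatrix Subtype.val (Sum.elim (D.orderEmbOfFin hD) fun j => (κ j).1)
  let r (i : γ) (x : Fin (u + 1)) : S :=
    ⟨(S.erase (ρ i)).orderEmbOfFin (by simp [hS]) x,
      Finset.mem_of_mem_erase (Finset.orderEmbOfFin_mem _ _ _)⟩
  choose ε hε using fun j : γ => exists_det_submatrix_orderEmbOfFin_insert hD (κ j).2
    (by rw [Finset.card_insert_of_notMem (κ j).2, hD]) N
  have hminor (i j : γ) : minorPresentation k (u + 1) m n
      (X (MinorIndex.bordered hS hD (ρ i) (κ j))) = (ε j : ℤ) * borderedMinors P r i j := by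
    rw [minorPresentation, aeval_X, genericMinor_eq_det_submatrix]
    refine (hε j _).trans ?_
    simp only [borderedMinors, Matrix.of_apply, P, Matrix.submatrix_submatrix, Fin.comp_snoc]
    rfl
  have hmatrix : (minorPresentation k (u + 1) m n).mapMatrix
      (Matrix.of fun i j => X (MinorIndex.bordered hS hD (ρ i) (κ j))) =
        Matrix.of fun i j => ((ε j : ℤ) : MvPolynomial _ k) * borderedMinors P r i j :=
    Matrix.ext hminor
  change minorPresentation k (u + 1) m n (Matrix.det _) = 0
  rw [AlgHom.map_det, hmatrix, Matrix.det_mul_row,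
    det_borderedMinors_eq_zero (by rw [Fintype.card_coe, hS]; omega), mul_zero]

theorem coeff_eq_zero_of_support_subset_pair {Q : MvPolynomial (MinorIndex (u + 1) m n) k}
    (hQ : Q ∈ minorRelations k (u + 1) m n) {p p' : S} (hp : p ≠ p') (q q' : {q // q ∉ D})
    {d : MinorIndex (u + 1) m n →₀ ℕ} (hd : ∀ a ∈ d.support,
      a = MinorIndex.bordered hS hD p q ∨ a = MinorIndex.bordered hS hD p' q') :
    coeff d Q = 0 := by
  obtain ⟨τ, hτ, hτ'⟩ := exists_image_erase_eq_insert (hS.trans (by rw [hD])) p.2 p'.2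
    (Subtype.coe_ne_coe.mpr hp) q.1 q'.1
  refine coeff_eq_zero_of_mem_minorRelations u.succ_ne_zero hS τ hQ fun a ha => ?_
  rcases hd a ha with rfl | rfl
  · exact ⟨Finset.erase_subset _ _, hτ.symm⟩
  · exact ⟨Finset.erase_subset _ _, hτ'.symm⟩

theorem borderedRelation_notMem_span [Nontrivial k] {ρ : Fin 3 → S} (hρ : ρ.Injective)
    {κ : Fin 3 → {q // q ∉ D}} (hκ : κ.Injective) :
    borderedRelation k hS hD ρ κ ∉
      Ideal.span {x | x ∈ minorRelations k (u + 1) m n ∧ x.IsHomogeneous 2} := by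
  classical
  let a (i j : Fin 3) := MinorIndex.bordered hS hD (ρ i) (κ j)
  have ha : a.uncurry.Injective := (MinorIndex.bordered_injective hS hD).comp (hρ.prodMap hκ)
  intro hmem
  have hcoeff := coeff_diagonal_det_X (k := k) a ha
  refine one_ne_zero (hcoeff.symm.trans (coeff_eq_zero_of_mem_span (fun Q hQ d hd => ?_) hmem))
  by_contra hdQ
  have hdeg : d.degree = 2 := by
    have := hQ.2 hdQ
    rwa [Finsupp.degree_eq_weight_one]
  have hsupp : d.support ⊆ Finset.univ.image fun i => a i i := by
    rw [← support_sum_single_one]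
    exact Finsupp.support_mono hd
  obtain ⟨i, hi⟩ := exists_notMem_support_of_degree_lt_card (b := fun i => a i i) (d := d)
    (fun i j hij => (Prod.mk.inj (ha hij)).1) (by rw [hdeg, Fintype.card_fin]; omega)
  obtain ⟨j, l, hjl, hi'⟩ : ∃ j l : Fin 3, j ≠ l ∧ ∀ x, x ≠ i → x = j ∨ x = l := by
    clear hi; revert i; decide
  refine hdQ (coeff_eq_zero_of_support_subset_pair hS hD hQ.1 (hρ.ne hjl) (κ j) (κ l)
    fun b hb => ?_)
  obtain ⟨x, -, rfl⟩ := Finset.mem_image.mp (hsupp hb)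
  exact (hi' x (by rintro rfl; exact hi hb)).imp (fun h => by rw [h]) fun h => by rw [h]

end Relations

theorem minorRelations_has_cubic_minimal_generator_general (k : Type*) [CommRing k] [Nontrivial k]
    (t m n : ℕ) (ht : 2 ≤ t) (htm : t + 1 ≤ m) (hn : t + 2 ≤ n) :
    ∃ f : MvPolynomial (MinorIndex t m n) k,
      f ∈ minorRelations k t m n ∧ f.IsHomogeneous 3 ∧
      f ∉ Ideal.span {x | x ∈ minorRelations k t m n ∧ x.IsHomogeneous 2} := by
  obtain ⟨u, rfl⟩ := Nat.exists_eq_add_of_le' (one_le_two.trans ht)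
  obtain ⟨S, -, hS⟩ := Finset.exists_subset_card_eq (s := (Finset.univ : Finset (Fin m)))
    (n := u + 2) (by rw [Finset.card_univ, Fintype.card_fin]; omega)
  obtain ⟨ρ⟩ : Nonempty (Fin 3 ↪ S) := Function.Embedding.nonempty_of_card_le
    (by rw [Fintype.card_fin, Fintype.card_coe]; omega)
  obtain ⟨D, -, hD⟩ := Finset.exists_subset_card_eq (s := (Finset.univ : Finset (Fin n)))
    (n := u) (by rw [Finset.card_univ, Fintype.card_fin]; omega)
  obtain ⟨κ⟩ : Nonempty (Fin 3 ↪ {q // q ∉ D}) := Function.Embedding.nonempty_of_card_le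
    (by rw [Fintype.card_subtype_compl]; simp [hD]; omega)
  exact ⟨borderedRelation k hS hD ρ κ,
    borderedRelation_mem_minorRelations hS hD ρ κ (by simp), isHomogeneous_det_X _,
    borderedRelation_notMem_span hS hD ρ.injective κ.injective⟩

/-- For `2 ≤ t`, `t + 1 ≤ m ≤ n` and `t + 2 ≤ n`, the ideal of relations of the
`t`-minors has a minimal generator of degree 3: some homogeneous element of degree 3 of
`J_t(m,n)` does not lie in the ideal generated by the degree-2 homogeneous elements of
`J_t(m,n)`. -/
theorem minorRelations_has_cubic_minimal_generator (k : Type*) [Field k] [CharZero k]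
    (t m n : ℕ) (ht : 2 ≤ t) (htm : t + 1 ≤ m) (hmn : m ≤ n) (hn : t + 2 ≤ n) :
    ∃ f : MvPolynomial (MinorIndex t m n) k,
      f ∈ minorRelations k t m n ∧ f.IsHomogeneous 3 ∧
      f ∉ Ideal.span {x | x ∈ minorRelations k t m n ∧ x.IsHomogeneous 2} :=
  minorRelations_has_cubic_minimal_generator_general k t m n ht htm hn
end
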